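/- There exist W₀ and a constant K such that for every W ≥ W₀, if Λ is a single cube of side W in ℤ³ containing 0, then for all E ∈ 𝓘 the averaged density of states is bounded: |ρ̄_Λ(E)| ≤ K, with K independent of W and Λ. -/

import Mathlib

open scoped BigOperators Topology
open Matrix MeasureTheory Filter

noncomputable section

/-- The discrete torus of side lengths `L i`; when each `L i` is a positive multiple of `W`,
this is a union of cubes of side `W` (containing `0`) with periodic boundary conditions. -/
abbrev Torus (L : Fin 3 → ℕ) := (i : Fin 3) → ZMod (L i)

/-- Unit lattice vector in direction `i`. -/
def unitVec (L : Fin 3 → ℕ) (i : Fin 3) : Torus L := fun j => if j = i then 1 else 0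

/-- Discrete Laplacian with periodic boundary conditions. -/
def lap (L : Fin 3 → ℕ) : Matrix (Torus L) (Torus L) ℝ :=
  Matrix.of fun x y =>
    (∑ i : Fin 3, ((if y = x + unitVec L i then (1 : ℝ) else 0) +
        (if y = x - unitVec L i then (1 : ℝ) else 0))) - (if y = x then 6 else 0)

/-- Distance to `0` in `ℤ/n`, via the minimal representative. -/
def zdist {n : ℕ} (x : ZMod n) : ℕ := min x.val (n - x.val)

/-- Euclidean distance on the torus. -/
def tdist (L : Fin 3 → ℕ) (x y : Torus L) : ℝ :=
  Real.sqrt (∑ i : Fin 3, ((zdist (x i - y i) : ℝ)) ^ 2)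

/-- The band covariance profile `J = (-W²Δ + 1)⁻¹`. -/
def Jmat (L : Fin 3 → ℕ) [∀ i, NeZero (L i)] (W : ℕ) : Matrix (Torus L) (Torus L) ℝ :=
  (((W : ℝ) ^ 2) • (-lap L) + 1)⁻¹

def mr2 (E : ℝ) : ℝ := 2 * (1 - E ^ 2 / 4)
def mi2 (E : ℝ) : ℝ := E * Real.sqrt (1 - E ^ 2 / 4)
def mr (E : ℝ) : ℝ := Real.sqrt (mr2 E)

/-- `ℰ = E/2 - i√(1 - E²/4)`. -/
def calE (E : ℝ) : ℂ := ((E / 2 : ℝ) : ℂ) - (Real.sqrt (1 - E ^ 2 / 4) : ℝ) * Complex.I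
/-- `ℰ̄ = E - ℰ = E/2 + i√(1 - E²/4)`, the complex conjugate of `ℰ`. -/
def calEbar (E : ℝ) : ℂ := ((E / 2 : ℝ) : ℂ) + (Real.sqrt (1 - E ^ 2 / 4) : ℝ) * Complex.I

/-- `C = (-W²Δ + m_r²)⁻¹`. -/
def Cmat (L : Fin 3 → ℕ) [∀ i, NeZero (L i)] (W : ℕ) (E : ℝ) : Matrix (Torus L) (Torus L) ℝ :=
  (((W : ℝ) ^ 2) • (-lap L) + mr2 E • 1)⁻¹

/-- `B = (C⁻¹ + i m_i²·Id)⁻¹`. -/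
def Bmat (L : Fin 3 → ℕ) [∀ i, NeZero (L i)] (W : ℕ) (E : ℝ) : Matrix (Torus L) (Torus L) ℂ :=
  (((Cmat L W E)⁻¹).map Complex.ofReal + (mi2 E * Complex.I) • 1)⁻¹

/-- The energy window `𝓘 = {E : η ≤ |E| ≤ 1.8}`. -/
def specI (η : ℝ) : Set ℝ := {E : ℝ | η ≤ |E| ∧ |E| ≤ 1.8}

/-- Wigner semicircle density `(1/π)√(1 - E²/4)`. -/
def rhoSC (E : ℝ) : ℝ := Real.sqrt (1 - E ^ 2 / 4) / Real.pi

/-- Real quadratic form `aᵀ M a`. -/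
def qf (L : Fin 3 → ℕ) [∀ i, NeZero (L i)] (M : Matrix (Torus L) (Torus L) ℝ)
    (a : Torus L → ℝ) : ℝ := a ⬝ᵥ M.mulVec a

/-- Sample space: one standard Gaussian for each ordered pair of sites. -/
abbrev Config (L : Fin 3 → ℕ) := (Torus L × Torus L) → ℝ

/-- Product of standard Gaussians. -/
def gaussMeas (L : Fin 3 → ℕ) [∀ i, NeZero (L i)] : Measure (Config L) :=
  Measure.pi fun _ => ProbabilityTheory.gaussianReal 0 1

/-- An (arbitrary) linear order on the sites, used to build the Hermitian matrix. -/
def siteIdx (L : Fin 3 → ℕ) [∀ i, NeZero (L i)] (x : Torus L) : ℕ :=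
  ((Fintype.equivFin (Torus L)) x).val

/-- The random band matrix: Hermitian, with centered jointly Gaussian entries of covariance
`E[H_ij H_kl] = δ_jk δ_il J_ij` (off-diagonal entries complex, diagonal entries real). -/
def Hmat (L : Fin 3 → ℕ) [∀ i, NeZero (L i)] (W : ℕ) (ω : Config L) :
    Matrix (Torus L) (Torus L) ℂ :=
  Matrix.of fun i j =>
    if i = j then ((Real.sqrt (Jmat L W i i) * ω (i, i) : ℝ) : ℂ)
    else if siteIdx L i < siteIdx L j then
      ((Real.sqrt (Jmat L W i j / 2) : ℝ) : ℂ) * ((ω (i, j) : ℂ) + Complex.I * (ω (j, i) : ℂ))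
    else
      ((Real.sqrt (Jmat L W i j / 2) : ℝ) : ℂ) * ((ω (j, i) : ℂ) - Complex.I * (ω (i, j) : ℂ))

/-- Retarded Green's function `G⁺ = (E + iε - H)⁻¹`. -/
def Green (L : Fin 3 → ℕ) [∀ i, NeZero (L i)] (W : ℕ) (E ε : ℝ) (ω : Config L) :
    Matrix (Torus L) (Torus L) ℂ :=
  (((E : ℂ) + (ε : ℂ) * Complex.I) • (1 : Matrix (Torus L) (Torus L) ℂ) - Hmat L W ω)⁻¹

/-- Averaged Green's function entry `E[(G⁺)_{xy}]`. -/
def avgGreen (L : Fin 3 → ℕ) [∀ i, NeZero (L i)] (W : ℕ) (E ε : ℝ) (x y : Torus L) : ℂ :=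
  ∫ ω, Green L W E ε ω x y ∂(gaussMeas L)

/-- Regularized averaged density of states `-(1/π) Im E[(G⁺)₀₀]`. -/
def dos (L : Fin 3 → ℕ) [∀ i, NeZero (L i)] (W : ℕ) (E ε : ℝ) : ℝ :=
  -(1 / Real.pi) * (avgGreen L W E ε 0 0).im

section GaussianShift

/-- Standard Gaussian measure on `ι → ℝ`. -/
abbrev stdGauss (ι : Type*) [Fintype ι] : Measure (ι → ℝ) :=
  Measure.pi fun _ => ProbabilityTheory.gaussianReal 0 1

open ProbabilityTheory

lemma gaussianReal_eq_withDensity (a : ℝ) :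
    gaussianReal a 1 = (gaussianReal 0 1).withDensity
      fun x => ENNReal.ofReal (Real.exp (a * x - a ^ 2 / 2)) := by
  rw [gaussianReal_of_var_ne_zero _ one_ne_zero, gaussianReal_of_var_ne_zero _ one_ne_zero,
    ← withDensity_mul _ (measurable_gaussianPDF _ _) (by fun_prop)]
  congr 1
  ext x
  simp only [Pi.mul_apply, gaussianPDF, gaussianPDFReal]
  rw [← ENNReal.ofReal_mul (by positivity), mul_assoc (Real.sqrt _)⁻¹, ← Real.exp_add]
  congr 3
  simp only [NNReal.coe_one]
  ring

variable {ι : Type*} [Fintype ι]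

lemma lintegral_stdGauss_prod (f : ι → ℝ → ℝ) (h0 : ∀ i x, 0 ≤ f i x)
    (hi : ∀ i, Integrable (f i) (gaussianReal 0 1)) :
    ∫⁻ x, ∏ i, ENNReal.ofReal (f i (x i)) ∂stdGauss ι =
      ∏ i, ∫⁻ x, ENNReal.ofReal (f i x) ∂gaussianReal 0 1 := by
  have h1 : ∀ x : ι → ℝ, ∏ i, ENNReal.ofReal (f i (x i)) = ENNReal.ofReal (∏ i, f i (x i)) :=
    fun x => (ENNReal.ofReal_prod_of_nonneg fun i _ => h0 i _).symm
  simp_rw [h1]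
  rw [← ofReal_integral_eq_lintegral_ofReal (Integrable.fintype_prod (f := f) hi)
    (Eventually.of_forall fun x => Finset.prod_nonneg fun i _ => h0 i _),
    integral_fintype_prod_eq_prod, ENNReal.ofReal_prod_of_nonneg
      fun i _ => integral_nonneg (h0 i)]
  exact Finset.prod_congr rfl fun i _ =>
    ofReal_integral_eq_lintegral_ofReal (hi i) (Eventually.of_forall (h0 i))

/-- Cameron–Martin density of the translation by `v`. -/
def cmDensity (v x : ι → ℝ) : ℝ := Real.exp (∑ i, (v i * x i - v i ^ 2 / 2))

lemma cmDensity_nonneg (v x : ι → ℝ) : 0 ≤ cmDensity v x := Real.exp_nonneg _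

lemma measurable_cmDensity (v : ι → ℝ) : Measurable (cmDensity v) := by
  unfold cmDensity; fun_prop

lemma stdGauss_map_add (v : ι → ℝ) :
    (stdGauss ι).map (fun x => x + v) =
      (stdGauss ι).withDensity fun x => ENNReal.ofReal (cmDensity v x) := by
  have h1 : (stdGauss ι).map (fun x => x + v) = Measure.pi fun i => gaussianReal (v i) 1 := by
    have := Measure.pi_map_pi (μ := fun _ : ι => gaussianReal 0 1)
      (f := fun i (x : ℝ) => x + v i) (fun i => by fun_prop)
    simp only [gaussianReal_map_add_const, zero_add] at this
    exact this
  rw [h1]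
  symm
  refine (Measure.pi_eq fun s hs => ?_).symm
  rw [withDensity_apply _ (MeasurableSet.univ_pi hs), ← lintegral_indicator (MeasurableSet.univ_pi hs)]
  have h2 : ∀ x : ι → ℝ, (Set.univ.pi s).indicator (fun x => ENNReal.ofReal (cmDensity v x)) x =
      ∏ i, ENNReal.ofReal ((s i).indicator (fun y => Real.exp (v i * y - v i ^ 2 / 2)) (x i)) := by
    intro x
    by_cases hx : x ∈ Set.univ.pi s
    · rw [Set.indicator_of_mem hx, cmDensity, Real.exp_sum, ENNReal.ofReal_prod_of_nonneg
        fun i _ => (Real.exp_pos _).le]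
      refine Finset.prod_congr rfl fun i _ => ?_
      rw [Set.indicator_of_mem (hx i trivial)]
    · rw [Set.indicator_of_notMem hx]
      simp only [Set.mem_pi, Set.mem_univ, true_imp_iff, not_forall] at hx
      obtain ⟨i, hi⟩ := hx
      exact (Finset.prod_eq_zero (Finset.mem_univ i) (by simp [hi])).symm
  simp_rw [h2]
  have hint : ∀ a : ℝ, Integrable (fun y => Real.exp (a * y - a ^ 2 / 2)) (gaussianReal 0 1) := by
    intro a
    simp_rw [Real.exp_sub, div_eq_mul_inv]
    exact (integrable_exp_mul_gaussianReal a).mul_const _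
  rw [lintegral_stdGauss_prod (f := fun i => (s i).indicator fun y => Real.exp (v i * y - v i ^ 2 / 2))
    (fun i x => Set.indicator_nonneg (fun _ _ => (Real.exp_pos _).le) _)
    (fun i => (hint _).indicator (hs i))]
  refine Finset.prod_congr rfl fun i _ => ?_
  rw [gaussianReal_eq_withDensity (v i), withDensity_apply _ (hs i), ← lintegral_indicator (hs i)]
  refine lintegral_congr fun y => ?_
  by_cases hy : y ∈ s i <;> simp [hy]

lemma lintegral_stdGauss_add (v : ι → ℝ) (f : (ι → ℝ) → ENNReal) (hf : Measurable f) :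
    ∫⁻ x, f (x + v) ∂stdGauss ι = ∫⁻ x, ENNReal.ofReal (cmDensity v x) * f x ∂stdGauss ι := by
  rw [← lintegral_map (f := f) (g := fun x => x + v) hf (by fun_prop), stdGauss_map_add,
    lintegral_withDensity_eq_lintegral_mul _ (measurable_cmDensity v).ennreal_ofReal hf]
  rfl

lemma integral_stdGauss_add (v : ι → ℝ) (f : (ι → ℝ) → ℂ) (hf : Measurable f) :
    ∫ x, f (x + v) ∂stdGauss ι = ∫ x, (cmDensity v x : ℂ) * f x ∂stdGauss ι := by
  rw [← integral_map (f := f) (φ := fun x => x + v) (by fun_prop) hf.aestronglyMeasurable,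
    stdGauss_map_add, integral_withDensity_eq_integral_toReal_smul
      (measurable_cmDensity v).ennreal_ofReal (Eventually.of_forall fun _ => ENNReal.ofReal_lt_top)]
  refine integral_congr_ae (Eventually.of_forall fun x => ?_)
  simp [ENNReal.toReal_ofReal, cmDensity, Real.exp_nonneg, Complex.real_smul, -Complex.ofReal_exp, -Complex.ofReal_sum]

lemma two_exp_le_cmDensity (v x : ι → ℝ) :
    2 * Real.exp (-((∑ i, v i ^ 2) / 2)) ≤ cmDensity v x + cmDensity (-v) x := by
  have h : ∀ a b : ℝ, 2 * Real.exp (-b) ≤ Real.exp (a - b) + Real.exp (-a - b) := by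
    intro a b
    have h1 := Real.one_le_cosh a
    rw [Real.cosh_eq] at h1
    rw [sub_eq_add_neg, sub_eq_add_neg, Real.exp_add, Real.exp_add, ← add_mul]
    gcongr; linarith
  have := h (∑ i, v i * x i) ((∑ i, v i ^ 2) / 2)
  simpa [cmDensity, Finset.sum_sub_distrib, Finset.sum_div, Finset.sum_neg_distrib] using this

/-- Gaussian integrals are controlled by symmetrised translates. -/
lemma lintegral_le_translates (v : ι → ℝ) {R : ℝ} (hR : ∑ i, v i ^ 2 ≤ 2 * R)
    (f : (ι → ℝ) → ENNReal) (hf : Measurable f) :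
    2 * ∫⁻ x, f x ∂stdGauss ι ≤ ENNReal.ofReal (Real.exp R) *
      (∫⁻ x, f (x + v) ∂stdGauss ι + ∫⁻ x, f (x - v) ∂stdGauss ι) := by
  simp_rw [sub_eq_add_neg]
  rw [lintegral_stdGauss_add v f hf, lintegral_stdGauss_add (-v) f hf,
    ← lintegral_add_left (by exact ((measurable_cmDensity v).ennreal_ofReal).mul hf),
    ← lintegral_const_mul' _ _ ENNReal.ofReal_ne_top, ← lintegral_const_mul _ hf]
  refine lintegral_mono fun x => ?_
  rw [← add_mul, ← mul_assoc, ← ENNReal.ofReal_add (cmDensity_nonneg _ _) (cmDensity_nonneg _ _),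
    ← ENNReal.ofReal_mul (Real.exp_nonneg _)]
  gcongr
  rw [show (2 : ENNReal) = ENNReal.ofReal 2 by simp]
  refine ENNReal.ofReal_le_ofReal ?_
  have h1 := two_exp_le_cmDensity v x
  have h2 : Real.exp (-R) ≤ Real.exp (-((∑ i, v i ^ 2) / 2)) := Real.exp_le_exp.2 (by linarith)
  calc (2 : ℝ) = Real.exp R * (2 * Real.exp (-R)) := by
        rw [mul_left_comm, ← Real.exp_add]; simp
    _ ≤ _ := by gcongr; linarith

/-- Averaging over a family of translations parametrised by a set of complex numbers. -/
lemma lintegral_le_of_average (v : ℂ → ι → ℝ) (hv : Measurable v) {S : Set ℂ}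
    (hS : MeasurableSet S) (hS0 : volume S ≠ 0) (hS1 : volume S ≠ ⊤) {R : ℝ}
    (hR : ∀ ζ ∈ S, ∑ i, v ζ i ^ 2 ≤ 2 * R) (f : (ι → ℝ) → ENNReal) (hf : Measurable f)
    {B : ENNReal} (hB : ∀ x, ∫⁻ ζ in S, f (x + v ζ) ≤ B)
    (hB' : ∀ x, ∫⁻ ζ in S, f (x - v ζ) ≤ B) :
    ∫⁻ x, f x ∂stdGauss ι ≤ ENNReal.ofReal (Real.exp R) * (B / volume S) := by
  have hm1 : Measurable fun p : ℂ × (ι → ℝ) => f (p.2 + v p.1) :=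
    hf.comp (measurable_snd.add (hv.comp measurable_fst))
  have hm2 : Measurable fun p : ℂ × (ι → ℝ) => f (p.2 - v p.1) :=
    hf.comp (measurable_snd.sub (hv.comp measurable_fst))
  have key : 2 * (volume S * ∫⁻ x, f x ∂stdGauss ι) ≤
      2 * (ENNReal.ofReal (Real.exp R) * B) := by
    calc 2 * (volume S * ∫⁻ x, f x ∂stdGauss ι) = ∫⁻ _ζ in S, 2 * ∫⁻ x, f x ∂stdGauss ι := by
          rw [setLIntegral_const]; ring
      _ ≤ ∫⁻ ζ in S, ENNReal.ofReal (Real.exp R) *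
          (∫⁻ x, f (x + v ζ) ∂stdGauss ι + ∫⁻ x, f (x - v ζ) ∂stdGauss ι) :=
          setLIntegral_mono' hS fun ζ hζ => lintegral_le_translates (v ζ) (hR ζ hζ) f hf
      _ = ENNReal.ofReal (Real.exp R) * (∫⁻ x, (∫⁻ ζ in S, f (x + v ζ)) ∂stdGauss ι +
          ∫⁻ x, (∫⁻ ζ in S, f (x - v ζ)) ∂stdGauss ι) := by
          rw [lintegral_const_mul' _ _ ENNReal.ofReal_ne_top, lintegral_add_left,
            lintegral_lintegral_swap (f := fun ζ x => f (x + v ζ)) hm1.aemeasurable,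
            lintegral_lintegral_swap (f := fun ζ x => f (x - v ζ)) hm2.aemeasurable]
          exact hm1.lintegral_prod_right'
      _ ≤ ENNReal.ofReal (Real.exp R) * (∫⁻ _x, B ∂stdGauss ι + ∫⁻ _x, B ∂stdGauss ι) := by
          gcongr
          · exact hB _
          · exact hB' _
      _ = 2 * (ENNReal.ofReal (Real.exp R) * B) := by simp; ring
  rw [← mul_div_assoc, ENNReal.le_div_iff_mul_le (Or.inl hS0) (Or.inl hS1), mul_comm]
  exact (ENNReal.mul_le_mul_iff_right two_ne_zero ENNReal.ofNat_ne_top).1 key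

end GaussianShift

section GaussianAverage

open ProbabilityTheory
variable {ι : Type*} [Fintype ι]

lemma lintegral_le_of_fiber (p : ι → Prop) [DecidablePred p] (f : (ι → ℝ) → ENNReal)
    (hf : Measurable f) (K : ENNReal)
    (h : ∀ ω₀ : ι → ℝ, ∫⁻ x, f (fun i => if hi : p i then x ⟨i, hi⟩ else ω₀ i)
      ∂stdGauss {i // p i} ≤ K) :
    ∫⁻ x, f x ∂stdGauss ι ≤ K := by
  have hmp := (measurePreserving_piEquivPiSubtypeProd (fun _ : ι => gaussianReal 0 1) p).symm
  rw [← hmp.lintegral_comp_emb (MeasurableEquiv.measurableEmbedding _),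
    lintegral_prod_symm' _ (by exact hf.comp (MeasurableEquiv.measurable _))]
  calc _ ≤ ∫⁻ _y, K ∂stdGauss {i // ¬ p i} := by
        refine lintegral_mono fun y => ?_
        convert h (fun i => if hi : p i then 0 else y ⟨i, hi⟩) using 3 with x
        congr 1
        funext i
        by_cases hi : p i <;> simp [hi, MeasurableEquiv.piEquivPiSubtypeProd, Equiv.piEquivPiSubtypeProd]
    _ = K := by simp

/-- Averaging over translations whose direction may depend on the untouched coordinates. -/
lemma lintegral_le_of_local_average (p : ι → Prop) [DecidablePred p] {S : Set ℂ}
    (hS : MeasurableSet S) (hS0 : volume S ≠ 0) (hS1 : volume S ≠ ⊤) {R : ℝ}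
    (f : (ι → ℝ) → ENNReal) (hf : Measurable f) {B : ENNReal}
    (h : ∀ ω₀ : ι → ℝ, ∃ v : ℂ → ι → ℝ, Measurable v ∧ (∀ ζ i, ¬ p i → v ζ i = 0) ∧
      (∀ ζ ∈ S, ∑ i, v ζ i ^ 2 ≤ 2 * R) ∧ ∀ ω : ι → ℝ, (∀ i, ¬ p i → ω i = ω₀ i) →
        ∫⁻ ζ in S, f (ω + v ζ) ≤ B ∧ ∫⁻ ζ in S, f (ω - v ζ) ≤ B) :
    ∫⁻ x, f x ∂stdGauss ι ≤ ENNReal.ofReal (Real.exp R) * (B / volume S) := by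
  refine lintegral_le_of_fiber p f hf _ fun ω₀ => ?_
  obtain ⟨v, hv, hvp, hvR, hB⟩ := h ω₀
  have key : ∀ x : {i // p i} → ℝ, ∀ i, ¬ p i →
      (fun i => if hi : p i then x ⟨i, hi⟩ else ω₀ i) i = ω₀ i := fun x i hi => by simp [hi]
  refine lintegral_le_of_average (fun ζ (i : {i // p i}) => v ζ i) (by fun_prop) hS hS0 hS1 (fun ζ hζ => ?_)
    (fun x => f (fun i => if hi : p i then x ⟨i, hi⟩ else ω₀ i)) (hf.comp ?_) (fun x => ?_)
    (fun x => ?_)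
  · refine le_trans ?_ (hvR ζ hζ)
    rw [← Fintype.sum_subtype_add_sum_subtype p]
    simp only [le_add_iff_nonneg_right]
    positivity
  · refine measurable_pi_lambda _ fun i => ?_
    by_cases hi : p i <;> simp only [hi, dite_true, dite_false] <;> fun_prop
  · convert (hB _ (key x)).1 using 3 with ζ
    congr 1; funext i
    by_cases hi : p i <;> simp [hi, hvp]
  · convert (hB _ (key x)).2 using 3 with ζ
    congr 1; funext i
    by_cases hi : p i <;> simp [hi, hvp]

lemma measurePreserving_stdGauss_signed_perm (σ : Equiv.Perm ι) (s : ι → ℝ)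
    (hs : ∀ i, s i = 1 ∨ s i = -1) :
    MeasurePreserving (fun (x : ι → ℝ) i => s i * x (σ i)) (stdGauss ι) (stdGauss ι) := by
  have h1 : MeasurePreserving (fun (x : ι → ℝ) i => x (σ i)) (stdGauss ι) (stdGauss ι) := by
    have := measurePreserving_piCongrLeft (fun _ : ι => gaussianReal 0 1) σ.symm
    convert this using 1
    funext x i
    have := MeasurableEquiv.piCongrLeft_apply_apply (β := fun _ : ι => ℝ) σ.symm x (σ i)
    simpa using this.symm
  have h2 : MeasurePreserving (fun (x : ι → ℝ) i => s i * x i) (stdGauss ι) (stdGauss ι) := by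
    refine measurePreserving_pi _ _ (f := fun i (y : ℝ) => s i * y) fun i => ⟨by fun_prop, ?_⟩
    rcases hs i with h | h
    · simp [h]
    · simp [h, gaussianReal_map_neg]
  exact h2.comp h1

lemma integrable_exp_linear_stdGauss (v : ι → ℝ) :
    Integrable (fun x => Real.exp (∑ i, v i * x i)) (stdGauss ι) := by
  simp_rw [Real.exp_sum]
  exact Integrable.fintype_prod (f := fun i (y : ℝ) => Real.exp (v i * y))
    fun i => integrable_exp_mul_gaussianReal (v i)

end GaussianAverage

section Resolvent

variable {n : Type*} [Fintype n] [DecidableEq n]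

/-- The resolvent `(z - M)⁻¹`. -/
def resolvent' (M : Matrix n n ℂ) (z : ℂ) : Matrix n n ℂ := (z • (1 : Matrix n n ℂ) - M)⁻¹

lemma im_star_dotProduct_mulVec {M : Matrix n n ℂ} (hM : M.IsHermitian) (x : n → ℂ) :
    (star x ⬝ᵥ M *ᵥ x).im = 0 := by
  have h : star (star x ⬝ᵥ M *ᵥ x) = star x ⬝ᵥ M *ᵥ x := by
    rw [← star_dotProduct, star_mulVec, hM.eq, ← dotProduct_mulVec]
  exact Complex.conj_eq_iff_im.1 h

lemma star_dotProduct_self (x : n → ℂ) : star x ⬝ᵥ x = ((∑ i, ‖x i‖ ^ 2 : ℝ) : ℂ) := by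
  simp only [dotProduct, Pi.star_apply, RCLike.star_def, Complex.conj_mul']
  push_cast; rfl

lemma im_star_dotProduct_shifted {M : Matrix n n ℂ} (hM : M.IsHermitian) (z : ℂ) (x : n → ℂ) :
    (star x ⬝ᵥ (z • (1 : Matrix n n ℂ) - M) *ᵥ x).im = z.im * ∑ i, ‖x i‖ ^ 2 := by
  rw [sub_mulVec, dotProduct_sub, Complex.sub_im, im_star_dotProduct_mulVec hM, smul_mulVec,
    one_mulVec, dotProduct_smul, star_dotProduct_self, smul_eq_mul, Complex.im_mul_ofReal, sub_zero]

lemma isUnit_det_shifted {M : Matrix n n ℂ} (hM : M.IsHermitian) {z : ℂ} (hz : 0 < z.im) :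
    IsUnit (z • (1 : Matrix n n ℂ) - M).det := by
  rw [isUnit_iff_ne_zero]
  intro h0
  obtain ⟨x, hx, hx0⟩ := exists_mulVec_eq_zero_iff.2 h0
  have h := im_star_dotProduct_shifted hM z x
  rw [hx0, dotProduct_zero, Complex.zero_im] at h
  have h1 : ∑ i, ‖x i‖ ^ 2 = 0 := by
    rcases mul_eq_zero.1 h.symm with h | h
    · exact absurd h hz.ne'
    · exact h
  apply hx
  funext i
  have := (Finset.sum_eq_zero_iff_of_nonneg (fun i _ => by positivity)).1 h1 i (Finset.mem_univ i)
  simpa using this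

lemma resolvent'_col {M : Matrix n n ℂ} (hM : M.IsHermitian) {z : ℂ} (hz : 0 < z.im) (i : n) :
    (z • (1 : Matrix n n ℂ) - M) *ᵥ (fun j => resolvent' M z j i) = Pi.single i 1 := by
  have h : (fun j => resolvent' M z j i) = resolvent' M z *ᵥ Pi.single i 1 := by
    rw [mulVec_single_one]; rfl
  rw [h, mulVec_mulVec, resolvent', mul_nonsing_inv _ (isUnit_det_shifted hM hz), one_mulVec]

lemma resolvent'_unique {M : Matrix n n ℂ} (hM : M.IsHermitian) {z : ℂ} (hz : 0 < z.im)
    {x y : n → ℂ} (h : (z • (1 : Matrix n n ℂ) - M) *ᵥ x = y) : x = resolvent' M z *ᵥ y := by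
  rw [← h, mulVec_mulVec, resolvent', nonsing_inv_mul _ (isUnit_det_shifted hM hz), one_mulVec]

lemma neg_im_resolvent' {M : Matrix n n ℂ} (hM : M.IsHermitian) {z : ℂ} (hz : 0 < z.im) (i : n) :
    -(resolvent' M z i i).im = z.im * ∑ j, ‖resolvent' M z j i‖ ^ 2 := by
  rw [← im_star_dotProduct_shifted hM z, resolvent'_col hM hz]
  simp

lemma neg_im_resolvent'_nonneg {M : Matrix n n ℂ} (hM : M.IsHermitian) {z : ℂ} (hz : 0 < z.im)
    (i : n) : 0 ≤ -(resolvent' M z i i).im := by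
  rw [neg_im_resolvent' hM hz]; positivity

lemma norm_resolvent'_le {M : Matrix n n ℂ} (hM : M.IsHermitian) {z : ℂ} (hz : 0 < z.im) (i : n) :
    ‖resolvent' M z i i‖ ≤ 1 / z.im := by
  have h := neg_im_resolvent' hM hz i
  have h1 : ‖resolvent' M z i i‖ ^ 2 ≤ ∑ j, ‖resolvent' M z j i‖ ^ 2 :=
    Finset.single_le_sum (f := fun j => ‖resolvent' M z j i‖ ^ 2) (fun j _ => by positivity)
      (Finset.mem_univ i)
  have h2 : -(resolvent' M z i i).im ≤ ‖resolvent' M z i i‖ :=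
    (neg_le_abs _).trans (Complex.abs_im_le_norm _)
  rw [le_div_iff₀ hz]
  by_contra! hc
  have h3 : z.im * ‖resolvent' M z i i‖ ^ 2 ≤ ‖resolvent' M z i i‖ :=
    (mul_le_mul_of_nonneg_left h1 hz.le).trans (h ▸ h2)
  have : 0 < ‖resolvent' M z i i‖ := by
    by_contra! h0
    have : ‖resolvent' M z i i‖ = 0 := le_antisymm h0 (norm_nonneg _)
    rw [this] at hc; linarith
  nlinarith

lemma sum_neg_im_resolvent' {M : Matrix n n ℂ} (hM : M.IsHermitian) {z : ℂ} (hz : 0 < z.im) :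
    ∑ i, -(resolvent' M z i i).im =
      ∑ k, z.im / ((z.re - hM.eigenvalues k) ^ 2 + z.im ^ 2) := by
  have hU := (hM.eigenvectorUnitary).2
  set U : Matrix n n ℂ := hM.eigenvectorUnitary.1 with hUdef
  have hUU : U * star U = 1 := Unitary.mul_star_self_of_mem hU
  have hUU' : star U * U = 1 := Unitary.star_mul_self_of_mem hU
  have hne : ∀ k, z - (hM.eigenvalues k : ℂ) ≠ 0 := fun k h => by
    have := congrArg Complex.im h
    simp at this; exact hz.ne' this
  have hG : resolvent' M z = U * diagonal (fun k => (z - (hM.eigenvalues k : ℂ))⁻¹) * star U := by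
    refine inv_eq_right_inv ?_
    have hM' : z • (1 : Matrix n n ℂ) - M =
        U * diagonal (fun k => z - (hM.eigenvalues k : ℂ)) * star U := by
      have h1 := hM.spectral_theorem
      rw [Unitary.conjStarAlgAut_apply] at h1
      have h2 : diagonal (fun k => z - (hM.eigenvalues k : ℂ)) =
          z • (1 : Matrix n n ℂ) - diagonal (RCLike.ofReal ∘ hM.eigenvalues) := by
        rw [smul_one_eq_diagonal, diagonal_sub]; rfl
      rw [h2, mul_sub, sub_mul, mul_smul_comm, mul_one, smul_mul_assoc, hUU]
      congr 1
    rw [hM']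
    calc _ = U * (diagonal (fun k => z - (hM.eigenvalues k : ℂ)) * ((star U * U) *
          diagonal (fun k => (z - (hM.eigenvalues k : ℂ))⁻¹))) * star U := by
          simp only [Matrix.mul_assoc]
      _ = 1 := by
          rw [hUU', one_mul, diagonal_mul_diagonal]
          simp [hne, hUU]
  have ht : (resolvent' M z).trace = ∑ k, (z - (hM.eigenvalues k : ℂ))⁻¹ := by
    rw [hG, trace_mul_comm, ← Matrix.mul_assoc, hUU', one_mul, trace_diagonal]
  have h3 := congrArg Complex.im ht
  simp only [trace, diag, Complex.im_sum] at h3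
  rw [Finset.sum_neg_distrib, h3, ← Finset.sum_neg_distrib]
  refine Finset.sum_congr rfl fun k _ => ?_
  rw [Complex.inv_im, Complex.normSq_apply]
  simp only [Complex.sub_im, Complex.ofReal_im, sub_zero, Complex.sub_re, Complex.ofReal_re]
  ring

/-- The compression of `M` to the complement of the site `i` has an eigenvalue within `r` of `m`. -/
def MinorEig (M : Matrix n n ℂ) (i : n) (m r : ℝ) : Prop :=
  ∃ (u : n → ℂ) (β : ℝ), ∑ j, ‖u j‖ ^ 2 = 1 ∧ u i = 0 ∧ |β - m| ≤ r ∧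
    ∀ j, j ≠ i → (M *ᵥ u) j = β * u j

/-- Expansion in an eigenbasis: if no eigenvalue is within `r` of `m`, then `B - m` expands. -/
lemma exists_eigenvalue_of_approx {M : Matrix n n ℂ} (hM : M.IsHermitian) {m r : ℝ} (hr : 0 ≤ r)
    {x : n → ℂ} (hx : x ≠ 0)
    (h : ∑ j, ‖(M *ᵥ x) j - m * x j‖ ^ 2 ≤ r ^ 2 * ∑ j, ‖x j‖ ^ 2) :
    ∃ k, |hM.eigenvalues k - m| ≤ r := by
  by_contra! hc
  set b := hM.eigenvectorBasis
  set X : EuclideanSpace ℂ n := WithLp.toLp 2 x with hX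
  set Y : EuclideanSpace ℂ n := WithLp.toLp 2 (M *ᵥ x - (m : ℂ) • x) with hY
  have hXn : ∑ j, ‖x j‖ ^ 2 = ∑ k, ‖inner ℂ (b k) X‖ ^ 2 := by
    rw [b.sum_sq_norm_inner_right, EuclideanSpace.norm_sq_eq]
  have hYn : ∑ j, ‖(M *ᵥ x) j - m * x j‖ ^ 2 = ∑ k, ‖inner ℂ (b k) Y‖ ^ 2 := by
    rw [b.sum_sq_norm_inner_right, EuclideanSpace.norm_sq_eq]
    rfl
  have hin : ∀ k, inner ℂ (b k) Y = ((hM.eigenvalues k - m : ℝ) : ℂ) * inner ℂ (b k) X := by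
    intro k
    have h1 : star (b k).ofLp ᵥ* M = (hM.eigenvalues k : ℂ) • star (b k).ofLp := by
      have := congrArg star (hM.mulVec_eigenvectorBasis k)
      rw [star_mulVec, hM.eq] at this
      rw [this]
      ext j; simp [b]
    simp only [EuclideanSpace.inner_eq_star_dotProduct, hX, hY]
    rw [sub_dotProduct, dotProduct_comm, dotProduct_mulVec, h1, smul_dotProduct, smul_dotProduct,
      dotProduct_comm x]
    simp only [smul_eq_mul]; push_cast; ring
  rw [hYn, hXn, Finset.mul_sum] at h
  have hlt : ∑ k, r ^ 2 * ‖inner ℂ (b k) X‖ ^ 2 < ∑ k, ‖inner ℂ (b k) Y‖ ^ 2 := by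
    have hkey : ∀ k, r ^ 2 < |hM.eigenvalues k - m| ^ 2 := fun k =>
      pow_lt_pow_left₀ (hc k) hr two_ne_zero
    refine Finset.sum_lt_sum (fun k _ => ?_) ?_
    · rw [hin, norm_mul, mul_pow, Complex.norm_real, Real.norm_eq_abs]
      exact mul_le_mul_of_nonneg_right (hkey k).le (by positivity)
    · by_contra! hz
      have hX0 : X = 0 := by
        have hsum : ∑ k, ‖inner ℂ (b k) X‖ ^ 2 = 0 := Finset.sum_eq_zero fun k _ => ?_
        · rw [b.sum_sq_norm_inner_right] at hsum
          simpa using hsum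
        have := hz k (Finset.mem_univ k)
        rw [hin, norm_mul, mul_pow, Complex.norm_real, Real.norm_eq_abs] at this
        have h4 : ‖inner ℂ (b k) X‖ ^ 2 ≤ 0 := by nlinarith [hkey k, sq_nonneg ‖inner ℂ (b k) X‖]
        simpa using le_antisymm h4 (by positivity)
      exact hx (by simpa [hX] using hX0)
  linarith

lemma minorEig_of_approx {M : Matrix n n ℂ} (hM : M.IsHermitian) (i : n) {m r : ℝ} (hr : 0 ≤ r)
    {x : n → ℂ} (hx : x ≠ 0) (hxi : x i = 0)
    (h : ∑ j, ‖(M *ᵥ x) j - m * x j‖ ^ 2 ≤ r ^ 2 * ∑ j, ‖x j‖ ^ 2) : MinorEig M i m r := by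
  set B : Matrix {j // j ≠ i} {j // j ≠ i} ℂ := M.submatrix (↑) (↑) with hB
  have hBh : B.IsHermitian := hM.submatrix _
  have hsplit : ∀ f : n → ℝ, ∑ j, f j = f i + ∑ j : {j // j ≠ i}, f j := fun f => by
    rw [← Fintype.sum_subtype_add_sum_subtype (fun j => j = i)]; simp [default]
  have hsplitC : ∀ f : n → ℂ, ∑ j, f j = f i + ∑ j : {j // j ≠ i}, f j := fun f => by
    rw [← Fintype.sum_subtype_add_sum_subtype (fun j => j = i)]; simp [default]
  have hmul : ∀ (y : n → ℂ), y i = 0 → ∀ j : {j // j ≠ i},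
      (B *ᵥ fun k => y k) j = (M *ᵥ y) j := fun y hy j => by
    simp only [mulVec, dotProduct, hB, submatrix_apply]
    rw [hsplitC fun k => M j k * y k, hy]; simp
  have hx' : (fun k : {j // j ≠ i} => x k) ≠ 0 := by
    intro h0
    apply hx
    funext j
    by_cases hj : j = i
    · rw [hj, hxi]; rfl
    · exact congrFun h0 ⟨j, hj⟩
  obtain ⟨k, hk⟩ := exists_eigenvalue_of_approx hBh hr hx' (m := m) (by
    simp_rw [hmul x hxi]
    rw [hsplit, hsplit (fun j => ‖x j‖ ^ 2), hxi] at h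
    simp only [norm_zero] at h
    have : 0 ≤ ‖(M *ᵥ x) i - ↑m * 0‖ ^ 2 := by positivity
    have e : (0 : ℝ) ^ 2 = 0 := by norm_num
    rw [e, zero_add] at h
    linarith)
  set w := hBh.eigenvectorBasis k
  refine ⟨fun j => if hj : j ≠ i then w ⟨j, hj⟩ else 0, hBh.eigenvalues k, ?_, by simp, hk, ?_⟩
  · rw [hsplit]
    have : ‖w‖ ^ 2 = 1 := by rw [hBh.eigenvectorBasis.orthonormal.1 k]; norm_num
    rw [EuclideanSpace.norm_sq_eq] at this
    rw [← this]
    beta_reduce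
    rw [dif_neg (not_not.2 rfl), norm_zero, zero_pow two_ne_zero, zero_add]
    exact Finset.sum_congr rfl fun j _ => by rw [dif_pos j.2]
  · intro j hj
    have h1 := congrFun (hBh.mulVec_eigenvectorBasis k) ⟨j, hj⟩
    have h2 := hmul (fun j => if hj : j ≠ i then w ⟨j, hj⟩ else 0) (by simp) ⟨j, hj⟩
    rw [← h2]
    have h3 : (fun k : {j // j ≠ i} => if hj : (k : n) ≠ i then w ⟨k, hj⟩ else 0) = w.ofLp := by
      funext k; simp [k.2]
    rw [h3, h1]
    simp [hj, w]

/-- Two eigenvalues near `m` force every one-site minor to have an eigenvalue near `m`. -/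
lemma minorEig_of_two {M : Matrix n n ℂ} (hM : M.IsHermitian) (i : n) {m r : ℝ} {k l : n}
    (hkl : k ≠ l) (hk : |hM.eigenvalues k - m| ≤ r) (hl : |hM.eigenvalues l - m| ≤ r) :
    MinorEig M i m r := by
  have hr : 0 ≤ r := (abs_nonneg _).trans hk
  set b := hM.eigenvectorBasis
  have hcomb : ∃ p q : ℂ, (p ≠ 0 ∨ q ≠ 0) ∧ p * b k i + q * b l i = 0 := by
    by_cases h : b k i = 0
    · exact ⟨1, 0, by simp, by simp [h]⟩
    · exact ⟨b l i, -b k i, by simp [h], by ring⟩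
  obtain ⟨p, q, hpq, h0⟩ := hcomb
  have hn : ∀ p q : ℂ, ∑ j, ‖p * b k j + q * b l j‖ ^ 2 = ‖p‖ ^ 2 + ‖q‖ ^ 2 := by
    intro p q
    have h1 : ∑ j, ‖p * b k j + q * b l j‖ ^ 2 = ‖p • b k + q • b l‖ ^ 2 := by
      rw [EuclideanSpace.norm_sq_eq]; rfl
    have h2 : inner ℂ (p • b k) (q • b l) = 0 := by
      rw [inner_smul_left, inner_smul_right, b.orthonormal.2 hkl]; simp
    rw [h1, pow_two, norm_add_sq_eq_norm_sq_add_norm_sq_of_inner_eq_zero _ _ h2, norm_smul,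
      norm_smul, b.orthonormal.1, b.orthonormal.1]
    ring
  refine minorEig_of_approx hM i hr (x := fun j => p * b k j + q * b l j) ?_ h0 ?_
  · intro hx
    have := hn p q
    have hz : ∀ j, p * b k j + q * b l j = 0 := fun j => congrFun hx j
    simp only [hz, norm_zero] at this
    rcases hpq with h | h
    · have hp := norm_pos_iff.2 h
      simp only [ne_eq, OfNat.ofNat_ne_zero, not_false_eq_true, zero_pow,
        Finset.sum_const_zero] at this
      nlinarith [sq_nonneg ‖q‖, pow_pos hp 2]
    · have hp := norm_pos_iff.2 h
      simp only [ne_eq, OfNat.ofNat_ne_zero, not_false_eq_true, zero_pow,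
        Finset.sum_const_zero] at this
      nlinarith [sq_nonneg ‖p‖, pow_pos hp 2]
  · have hMx : ∀ j, (M *ᵥ fun j => p * b k j + q * b l j) j - m * (p * b k j + q * b l j) =
        (p * ((hM.eigenvalues k - m : ℝ) : ℂ)) * b k j +
          (q * ((hM.eigenvalues l - m : ℝ) : ℂ)) * b l j := by
      intro j
      have e : (fun j => p * b k j + q * b l j) = p • (b k).ofLp + q • (b l).ofLp := by
        funext j; simp
      rw [e, mulVec_add, mulVec_smul, mulVec_smul, hM.mulVec_eigenvectorBasis,
        hM.mulVec_eigenvectorBasis]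
      simp only [Pi.add_apply, Pi.smul_apply, smul_eq_mul, Complex.real_smul, b]
      push_cast; ring
    simp_rw [hMx]
    rw [hn, hn, norm_mul, norm_mul, mul_pow, mul_pow, Complex.norm_real, Complex.norm_real,
      Real.norm_eq_abs, Real.norm_eq_abs]
    have h1 : |hM.eigenvalues k - m| ^ 2 ≤ r ^ 2 := pow_le_pow_left₀ (abs_nonneg _) hk 2
    have h2 : |hM.eigenvalues l - m| ^ 2 ≤ r ^ 2 := pow_le_pow_left₀ (abs_nonneg _) hl 2
    nlinarith [sq_nonneg ‖p‖, sq_nonneg ‖q‖]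

end Resolvent

section RankTwoAverage

variable {n : Type*} [Fintype n] [DecidableEq n]

/-- The Hermitian rank-two matrix `ζ u eᵢ* + ζ̄ eᵢ u*`. -/
def rankTwo (i : n) (u : n → ℂ) (ζ : ℂ) : Matrix n n ℂ :=
  Matrix.of fun j k => (if k = i then ζ * u j else 0) + (if j = i then star (ζ * u k) else 0)

lemma rankTwo_isHermitian (i : n) (u : n → ℂ) (ζ : ℂ) : (rankTwo i u ζ).IsHermitian := by
  ext j k
  simp only [rankTwo, conjTranspose_apply, of_apply, star_add]
  rw [add_comm]
  congr 1 <;> split_ifs <;> simp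

lemma rankTwo_mulVec (i : n) (u : n → ℂ) (ζ : ℂ) (x : n → ℂ) :
    rankTwo i u ζ *ᵥ x = (ζ * x i) • u + (star ζ * (star u ⬝ᵥ x)) • Pi.single i 1 := by
  funext j
  simp only [rankTwo, mulVec, dotProduct, of_apply, add_mul, Finset.sum_add_distrib, ite_mul,
    zero_mul, Finset.sum_ite_eq', Finset.mem_univ, if_true, Pi.add_apply, Pi.smul_apply,
    smul_eq_mul, Pi.single_apply, Pi.star_apply, star_mul']
  congr 1
  · ring
  · split_ifs with h
    · rw [mul_one, Finset.mul_sum]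
      exact Finset.sum_congr rfl fun k _ => by ring
    · simp

/-- Along a rank-two perturbation in the direction of an eigenvector of the minor, the diagonal
resolvent entry is an explicit function of `|ζ - ζ₀|²`. -/
lemma exists_resolvent'_rankTwo {M : Matrix n n ℂ} (hM : M.IsHermitian) {i : n} {u : n → ℂ} {β : ℝ}
    (hu1 : ∑ j, ‖u j‖ ^ 2 = 1) (hui : u i = 0) (hu : ∀ j, j ≠ i → (M *ᵥ u) j = β * u j)
    {z : ℂ} (hz : 0 < z.im) :
    ∃ ζ₀ κ : ℂ, ∀ ζ : ℂ, resolvent' (M + rankTwo i u ζ) z i i *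
      (κ - (Complex.normSq (ζ - ζ₀) : ℂ)) = z - β := by
  have hzβ : z - (β : ℂ) ≠ 0 := fun h => by
    have := congrArg Complex.im h
    simp at this; exact hz.ne' this
  set μ : ℂ := (M *ᵥ u) i with hμ
  set ζ₀ : ℂ := -star μ with hζ₀
  have hH : ∀ ζ, (M + rankTwo i u ζ).IsHermitian := fun ζ => hM.add (rankTwo_isHermitian i u ζ)
  have huu : star u ⬝ᵥ u = 1 := by rw [star_dotProduct_self, hu1]; simp
  have hMu : M *ᵥ u = (β : ℂ) • u + μ • Pi.single i 1 := by
    funext j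
    by_cases hj : j = i
    · subst hj; simp [hμ, hui]
    · simp [hu j hj, hj]
  have hMζu : ∀ ζ, (M + rankTwo i u ζ) *ᵥ u =
      (β : ℂ) • u + star (ζ - ζ₀) • Pi.single i 1 := fun ζ => by
    rw [add_mulVec, hMu, rankTwo_mulVec, hui, huu, hζ₀]
    simp only [mul_zero, zero_smul, zero_add, mul_one, sub_neg_eq_add, star_add, star_star]
    rw [add_smul, add_assoc, add_comm (μ • _)]
  have hux : ∀ ζ, (z - β) * (star u ⬝ᵥ fun j => resolvent' (M + rankTwo i u ζ) z j i) =
      (ζ - ζ₀) * resolvent' (M + rankTwo i u ζ) z i i := fun ζ => by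
    have h := congrArg (fun y => star u ⬝ᵥ y) (resolvent'_col (hH ζ) hz i)
    simp only [sub_mulVec, dotProduct_sub, smul_mulVec, one_mulVec, dotProduct_smul,
      smul_eq_mul, dotProduct_single, Pi.star_apply, hui, star_zero, mul_one] at h
    have h2 : star u ᵥ* (M + rankTwo i u ζ) =
        (β : ℂ) • star u + (ζ - ζ₀) • Pi.single i 1 := by
      have := congrArg star (hMζu ζ)
      rw [star_mulVec, (hH ζ).eq] at this
      rw [this, star_add, star_smul, star_smul, star_star]
      congr 1
      · simp
      · congr 1
        funext j
        simp only [Pi.star_apply, Pi.single_apply]; split_ifs <;> simp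
    rw [dotProduct_mulVec, h2, add_dotProduct, smul_dotProduct, smul_dotProduct,
      single_dotProduct] at h
    simp only [smul_eq_mul, one_mul] at h
    linear_combination h
  set a := resolvent' (M + rankTwo i u ζ₀) z i i with ha
  have ha0 : a ≠ 0 := by
    intro h0
    have h1 := neg_im_resolvent' (hH ζ₀) hz i
    rw [← ha, h0] at h1
    have h2 : ∑ j, ‖resolvent' (M + rankTwo i u ζ₀) z j i‖ ^ 2 = 0 := by
      rcases mul_eq_zero.1 (h1.symm.trans (by simp)) with h | h
      · exact absurd h hz.ne'
      · exact h
    have h3 : (fun j => resolvent' (M + rankTwo i u ζ₀) z j i) = 0 := by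
      funext j
      have := (Finset.sum_eq_zero_iff_of_nonneg (fun i _ => by positivity)).1 h2 j
        (Finset.mem_univ j)
      simpa using this
    have h4 := congrFun (resolvent'_col (hH ζ₀) hz i) i
    rw [h3] at h4
    simp at h4
  refine ⟨ζ₀, (z - β) / a, fun ζ => ?_⟩
  set x : n → ℂ := fun j => resolvent' (M + rankTwo i u ζ) z j i with hx
  have hxi : resolvent' (M + rankTwo i u ζ) z i i = x i := rfl
  have hGu : resolvent' (M + rankTwo i u ζ₀) z *ᵥ u = (z - β)⁻¹ • u := by
    refine (resolvent'_unique (hH ζ₀) hz ?_).symm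
    rw [mulVec_smul, sub_mulVec, hMζu, smul_mulVec, one_mulVec, sub_self, star_zero, zero_smul,
      add_zero, ← sub_smul, smul_smul, inv_mul_cancel₀ hzβ, one_smul]
  have hR : rankTwo i u ζ = rankTwo i u ζ₀ + rankTwo i u (ζ - ζ₀) := by
    ext j k
    simp only [rankTwo, of_apply, Matrix.add_apply]
    split_ifs <;> simp <;> ring
  have hx0 : x = resolvent' (M + rankTwo i u ζ₀) z *ᵥ
      (Pi.single i 1 + rankTwo i u (ζ - ζ₀) *ᵥ x) := by
    refine resolvent'_unique (hH ζ₀) hz ?_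
    rw [← resolvent'_col (hH ζ) hz i, ← hx, ← add_mulVec, hR]
    congr 1
    abel
  have h5 := congrFun hx0 i
  rw [rankTwo_mulVec, mulVec_add, mulVec_add, mulVec_smul, mulVec_smul, hGu, mulVec_single_one]
    at h5
  simp only [Pi.add_apply, Pi.smul_apply, hui, smul_eq_mul, mul_zero, zero_add, col_apply] at h5
  rw [← ha] at h5
  have h6 := hux ζ
  rw [← hx, hxi] at h6
  rw [hxi]
  have h7 : (Complex.normSq (ζ - ζ₀) : ℂ) = star (ζ - ζ₀) * (ζ - ζ₀) :=
    Complex.normSq_eq_conj_mul_self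
  rw [h7]
  have h8 : (z - β) * x i = (z - β) * a + star (ζ - ζ₀) * ((ζ - ζ₀) * x i) * a := by
    rw [← h6]; linear_combination (z - β) * h5
  field_simp
  linear_combination h8

/-- Pointwise bound for `g` solving `g (κ - r) = d + iε`. -/
lemma neg_im_le_of_mul_eq {g κ : ℂ} {r d ε : ℝ} (hε : 0 < ε) (hg : ‖g‖ ≤ 1 / ε)
    (h : g * (κ - (r : ℂ)) = (d : ℂ) + ε * Complex.I) :
    -g.im ≤ Real.sqrt ε * |κ.re - r| ^ (-(3 / 4 : ℝ)) +
      |d| * (|κ.im| / ((κ.re - r) ^ 2 + |κ.im| ^ 2)) := by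
  set w : ℂ := κ - (r : ℂ) with hw
  have hwre : w.re = κ.re - r := by simp [hw]
  have hwim : w.im = κ.im := by simp [hw]
  have hε' : ε ≤ ‖(d : ℂ) + ε * Complex.I‖ := by
    have := Complex.abs_im_le_norm ((d : ℂ) + ε * Complex.I)
    simp at this
    exact (le_abs_self ε).trans this
  have hwn : ε ^ 2 ≤ ‖w‖ := by
    rw [← h, norm_mul] at hε'
    have h1 : ‖g‖ * ‖w‖ ≤ 1 / ε * ‖w‖ := mul_le_mul_of_nonneg_right hg (norm_nonneg _)
    have h2 : ε ≤ 1 / ε * ‖w‖ := hε'.trans h1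
    rw [div_mul_eq_mul_div, one_mul, le_div_iff₀ hε] at h2
    nlinarith
  have hw0 : 0 < ‖w‖ := lt_of_lt_of_le (by positivity) hwn
  have hwne : w ≠ 0 := norm_pos_iff.1 hw0
  have hgeq : g = ((d : ℂ) + ε * Complex.I) / w := by rw [eq_div_iff hwne, h]
  have hns : Complex.normSq w = ‖w‖ ^ 2 := Complex.normSq_eq_norm_sq w
  have hns' : ‖w‖ ^ 2 = (κ.re - r) ^ 2 + |κ.im| ^ 2 := by
    rw [← hns, Complex.normSq_apply, hwre, hwim, sq_abs]; ring
  have him : -g.im = (d * κ.im - ε * (κ.re - r)) / ‖w‖ ^ 2 := by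
    rw [hgeq, Complex.div_im, hns, hwre, hwim]
    simp
    ring
  rw [him, sub_div, ← hns']
  have h1 : d * κ.im / ‖w‖ ^ 2 ≤ |d| * (|κ.im| / ‖w‖ ^ 2) := by
    rw [← mul_div_assoc, ← abs_mul]
    exact div_le_div_of_nonneg_right (le_abs_self _) (by positivity)
  have h2 : -(ε * (κ.re - r) / ‖w‖ ^ 2) ≤ Real.sqrt ε * |κ.re - r| ^ (-(3 / 4 : ℝ)) := by
    by_cases h0 : κ.re - r = 0
    · rw [h0]; simp
    have hp : 0 < |κ.re - r| := abs_pos.2 h0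
    have hle : |κ.re - r| ≤ ‖w‖ := by rw [← hwre]; exact Complex.abs_re_le_norm w
    have h3 : -(ε * (κ.re - r) / ‖w‖ ^ 2) ≤ ε * ‖w‖⁻¹ := by
      rw [← neg_div, div_le_iff₀ (by positivity), pow_two, ← mul_assoc, mul_assoc ε,
        inv_mul_cancel₀ hw0.ne', mul_one]
      have := neg_abs_le (κ.re - r)
      nlinarith
    have h4 : ‖w‖⁻¹ = ‖w‖ ^ (-(1 / 4 : ℝ)) * ‖w‖ ^ (-(3 / 4 : ℝ)) := by
      rw [← Real.rpow_add hw0, ← Real.rpow_neg_one]; norm_num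
    have h5 : ‖w‖ ^ (-(1 / 4 : ℝ)) ≤ (ε ^ 2) ^ (-(1 / 4 : ℝ)) :=
      Real.rpow_le_rpow_of_nonpos (by positivity) hwn (by norm_num)
    have h6 : ‖w‖ ^ (-(3 / 4 : ℝ)) ≤ |κ.re - r| ^ (-(3 / 4 : ℝ)) :=
      Real.rpow_le_rpow_of_nonpos hp hle (by norm_num)
    have h7 : ε * (ε ^ 2) ^ (-(1 / 4 : ℝ)) = Real.sqrt ε := by
      rw [← Real.rpow_natCast ε 2, ← Real.rpow_mul hε.le, Real.sqrt_eq_rpow]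
      nth_rewrite 1 [← Real.rpow_one ε]
      rw [← Real.rpow_add hε]; norm_num
    calc _ ≤ ε * ‖w‖⁻¹ := h3
      _ ≤ ε * ((ε ^ 2) ^ (-(1 / 4 : ℝ)) * |κ.re - r| ^ (-(3 / 4 : ℝ))) := by
          rw [h4]; gcongr
      _ = _ := by rw [← mul_assoc, h7]
  linarith

lemma lintegral_poisson {y : ℝ} (hy : 0 < y) (x : ℝ) :
    ∫⁻ r : ℝ, ENNReal.ofReal (y / ((x - r) ^ 2 + y ^ 2)) = ENNReal.ofReal Real.pi := by
  have e : ∀ r : ℝ, y / ((x - r) ^ 2 + y ^ 2) = y⁻¹ * (1 + ((r - x) / y) ^ 2)⁻¹ := fun r => by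
    have : (x - r) ^ 2 + y ^ 2 ≠ 0 := by positivity
    have : y ^ 2 + (r - x) ^ 2 ≠ 0 := by positivity
    field_simp
    ring
  have hint : Integrable fun r : ℝ => y⁻¹ * (1 + ((r - x) / y) ^ 2)⁻¹ :=
    ((integrable_inv_one_add_sq.comp_div hy.ne').comp_sub_right x).const_mul _
  simp_rw [e]
  rw [← ofReal_integral_eq_lintegral_ofReal hint (ae_of_all _ fun r => by positivity)]
  congr 1
  rw [integral_const_mul, integral_sub_right_eq_self (fun r => (1 + (r / y) ^ 2)⁻¹) x,
    Measure.integral_comp_div (fun r : ℝ => (1 + r ^ 2)⁻¹) y, integral_univ_inv_one_add_sq,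
    abs_of_pos hy, smul_eq_mul, inv_mul_cancel_left₀ hy.ne']

lemma lintegral_poisson_le (x y : ℝ) :
    ∫⁻ r : ℝ, ENNReal.ofReal (|y| / ((x - r) ^ 2 + |y| ^ 2)) ≤ ENNReal.ofReal Real.pi := by
  rcases (abs_nonneg y).eq_or_lt with h | h
  · simp [← h]
  · exact (lintegral_poisson h x).le

lemma lintegral_comp_normSq_sub_le (ζ₀ : ℂ) {h : ℝ → ENNReal} (hh : Measurable h) :
    ∫⁻ ζ : ℂ, h (Complex.normSq (ζ - ζ₀)) ≤ ENNReal.ofReal Real.pi * ∫⁻ r, h r := by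
  rw [lintegral_sub_right_eq_self (fun ζ : ℂ => h (Complex.normSq ζ)) ζ₀,
    ← Complex.lintegral_comp_polarCoord_symm]
  have h1 : ∀ p : ℝ × ℝ, Complex.normSq (Complex.polarCoord.symm p) = p.1 ^ 2 := fun p => by
    rw [Complex.polarCoord_symm_apply, Complex.normSq_mul, Complex.normSq_ofReal,
      Complex.ofReal_cos, Complex.ofReal_sin, ← Complex.ofReal_cos, ← Complex.ofReal_sin,
      Complex.normSq_add_mul_I, Real.cos_sq_add_sin_sq]
    ring
  have h2 := lintegral_image_eq_lintegral_abs_deriv_mul (s := Set.Ioi (0 : ℝ))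
    (f := fun r => r ^ 2) (f' := fun r => 2 * r) measurableSet_Ioi
    (fun x _ => by simpa using (hasDerivAt_pow 2 x).hasDerivWithinAt)
    (fun x hx y hy hxy => (pow_left_inj₀ (le_of_lt hx) (le_of_lt hy) two_ne_zero).1 hxy) h
  have h3 : ∫⁻ r in Set.Ioi (0 : ℝ), ENNReal.ofReal |2 * r| * h (r ^ 2) =
      2 * ∫⁻ r in Set.Ioi (0 : ℝ), ENNReal.ofReal r * h (r ^ 2) := by
    rw [← lintegral_const_mul _ (by fun_prop)]
    refine setLIntegral_congr_fun measurableSet_Ioi fun r hr => ?_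
    rw [abs_of_pos (mul_pos two_pos hr), ENNReal.ofReal_mul two_pos.le, mul_assoc]
    simp
  simp_rw [h1, smul_eq_mul]
  rw [polarCoord_target, Measure.volume_eq_prod, ← Measure.prod_restrict]
  have h4 := lintegral_prod_mul (μ := volume.restrict (Set.Ioi (0 : ℝ)))
    (ν := volume.restrict (Set.Ioo (-Real.pi) Real.pi))
    (f := fun r => ENNReal.ofReal r * h (r ^ 2)) (g := fun _ => 1) (by fun_prop) (by fun_prop)
  simp only [mul_one] at h4
  rw [h4, setLIntegral_one, Real.volume_Ioo]
  calc _ = ENNReal.ofReal Real.pi * (2 * ∫⁻ r in Set.Ioi (0 : ℝ), ENNReal.ofReal r * h (r ^ 2)) := by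
        rw [show Real.pi - -Real.pi = Real.pi * 2 by ring, ENNReal.ofReal_mul Real.pi_pos.le]
        simp; ring
    _ ≤ _ := by
        rw [← h3, ← h2]
        gcongr
        exact Measure.restrict_le_self

/-- The constant `∫_{|t|<1} |t|^{-3/4} dt`. -/
def singInt : ENNReal := ∫⁻ t : ℝ in Set.Ioo (-1) 1, ENNReal.ofReal (|t| ^ (-(3 / 4 : ℝ)))

lemma singInt_ne_top : singInt ≠ ⊤ := by
  have h1 : IntegrableOn (fun t : ℝ => |t| ^ (-(3 / 4 : ℝ))) (Set.Ioo (-1) 1) := by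
    have h0 : IntegrableOn (fun t : ℝ => |t| ^ (-(3 / 4 : ℝ))) (Set.Ioc 0 1) := by
      have := (intervalIntegral.intervalIntegrable_rpow' (a := 0) (b := 1)
        (r := -(3 / 4 : ℝ)) (by norm_num)).1
      exact this.congr_fun (fun t ht => by simp only; rw [abs_of_pos ht.1]) measurableSet_Ioc
    have h2 : IntegrableOn (fun t : ℝ => |t| ^ (-(3 / 4 : ℝ))) (Set.Ico (-1) 0) := by
      have := h0.comp_neg
      simpa using this
    refine (h2.union ((integrableOn_Icc_iff_integrableOn_Ioc (by simp)).2 h0)).mono_set fun t ht => ?_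
    rcases lt_or_ge t 0 with h | h
    · exact Or.inl ⟨ht.1.le, h⟩
    · exact Or.inr ⟨h, ht.2.le⟩
  exact h1.lintegral_lt_top.ne

/-- Main averaging estimate over the rank-two perturbation parameter. -/
lemma lintegral_resolvent'_rankTwo_le {M : Matrix n n ℂ} (hM : M.IsHermitian) {i : n} {E r : ℝ}
    {u : n → ℂ} {β : ℝ}
    (hu1 : ∑ j, ‖u j‖ ^ 2 = 1) (hui : u i = 0) (hβ : |β - E| ≤ r)
    (hu : ∀ j, j ≠ i → (M *ᵥ u) j = β * u j)
    {ε ρ : ℝ} (hε : 0 < ε) :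
    ∫⁻ ζ : ℂ in Metric.ball 0 ρ, ENNReal.ofReal
        (-(resolvent' (M + rankTwo i u ζ) (E + ε * Complex.I) i i).im) ≤
      ENNReal.ofReal (Real.sqrt ε) * (ENNReal.ofReal Real.pi * singInt + volume (Metric.ball (0:ℂ) ρ))
        + ENNReal.ofReal (Real.pi ^ 2 * r) := by
  have hz : 0 < ((E : ℂ) + ε * Complex.I).im := by simpa using hε
  obtain ⟨ζ₀, κ, hκ⟩ := exists_resolvent'_rankTwo hM hu1 hui hu hz
  have hpt : ∀ ζ : ℂ, ENNReal.ofReal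
      (-(resolvent' (M + rankTwo i u ζ) (E + ε * Complex.I) i i).im) ≤
      ENNReal.ofReal (Real.sqrt ε) *
        ((Set.Ioo (-1 : ℝ) 1).indicator (fun t => ENNReal.ofReal (|t| ^ (-(3 / 4 : ℝ))))
          (Complex.normSq (ζ - ζ₀) - κ.re) + 1) +
      ENNReal.ofReal r * ENNReal.ofReal
        (|κ.im| / ((κ.re - Complex.normSq (ζ - ζ₀)) ^ 2 + |κ.im| ^ 2)) := fun ζ => by
    have hH : (M + rankTwo i u ζ).IsHermitian := hM.add (rankTwo_isHermitian i u ζ)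
    have hg := norm_resolvent'_le hH hz i
    have him : ((E : ℂ) + ε * Complex.I).im = ε := by simp
    rw [him] at hg
    have h1 := neg_im_le_of_mul_eq (d := E - β) hε hg (by rw [hκ ζ]; push_cast; ring)
    have h2 : |E - β| ≤ r := by rw [abs_sub_comm]; exact hβ
    refine (ENNReal.ofReal_le_ofReal h1).trans ?_
    rw [ENNReal.ofReal_add (by positivity) (by positivity), ENNReal.ofReal_mul (by positivity),
      ENNReal.ofReal_mul (abs_nonneg _)]
    refine add_le_add (mul_le_mul_right ?_ _) ?_
    · rw [abs_sub_comm]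
      by_cases ht : Complex.normSq (ζ - ζ₀) - κ.re ∈ Set.Ioo (-1 : ℝ) 1
      · rw [Set.indicator_of_mem ht]; exact le_self_add
      · rw [Set.indicator_of_notMem ht, zero_add]
        rw [Set.mem_Ioo, ← abs_lt, not_lt] at ht
        refine ENNReal.ofReal_le_one.2 (Real.rpow_le_one_of_one_le_of_nonpos ht (by norm_num))
    · gcongr
  have hm1 : Measurable (fun t : ℝ => (Set.Ioo (-1 : ℝ) 1).indicator
      (fun t => ENNReal.ofReal (|t| ^ (-(3 / 4 : ℝ)))) (t - κ.re)) := by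
    refine Measurable.comp (g := (Set.Ioo (-1 : ℝ) 1).indicator
      (fun t => ENNReal.ofReal (|t| ^ (-(3 / 4 : ℝ))))) ?_ (by fun_prop)
    exact Measurable.indicator (by fun_prop) measurableSet_Ioo
  have hm2 : Measurable (fun t : ℝ => ENNReal.ofReal (|κ.im| / ((κ.re - t) ^ 2 + |κ.im| ^ 2))) := by
    fun_prop
  have hn : Measurable fun ζ : ℂ => Complex.normSq (ζ - ζ₀) :=
    (Complex.continuous_normSq.measurable).comp (measurable_id.sub_const _)
  refine (lintegral_mono hpt).trans ?_
  have hmm1 := hm1.comp hn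
  have hmm2 := hm2.comp hn
  simp only [Function.comp_def] at hmm1 hmm2
  rw [lintegral_add_right _ (hmm2.const_mul _), lintegral_const_mul _ (hmm1.add_const _),
    lintegral_add_right _ measurable_const, lintegral_const_mul _ hmm2, setLIntegral_one]
  refine add_le_add (mul_le_mul_right (add_le_add ?_ le_rfl) _) ?_
  · refine (setLIntegral_le_lintegral _ _).trans
      ((lintegral_comp_normSq_sub_le ζ₀ hm1).trans (mul_le_mul_right (le_of_eq ?_) _))
    rw [lintegral_sub_right_eq_self (fun t : ℝ => (Set.Ioo (-1 : ℝ) 1).indicator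
      (fun t => ENNReal.ofReal (|t| ^ (-(3 / 4 : ℝ)))) t) κ.re,
      lintegral_indicator measurableSet_Ioo, singInt]
  · rw [mul_comm (Real.pi ^ 2), ENNReal.ofReal_mul ((abs_nonneg _).trans hβ), pow_two Real.pi,
      ENNReal.ofReal_mul Real.pi_pos.le]
    refine mul_le_mul_right ((setLIntegral_le_lintegral _ _).trans
      ((lintegral_comp_normSq_sub_le ζ₀ hm2).trans (mul_le_mul_right ?_ _))) _
    exact lintegral_poisson_le _ _

end RankTwoAverage

section EnergyAverage

variable {n : Type*} [Fintype n] [DecidableEq n]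

lemma lintegral_poisson_Icc_le {E s ε l : ℝ} (hs : 0 < s) (hε : 0 < ε) :
    ∫⁻ t in Set.Icc (E - s) (E + s), ENNReal.ofReal (ε / ((t - l) ^ 2 + ε ^ 2)) ≤
      (if |l - E| ≤ 2 * s then ENNReal.ofReal Real.pi else 0) + ENNReal.ofReal (2 * ε / s) := by
  split_ifs with h
  · refine le_trans ?_ le_self_add
    refine (setLIntegral_le_lintegral _ _).trans (le_of_eq ?_)
    rw [← lintegral_poisson hε l]
    exact lintegral_congr fun t => by rw [← neg_sub, neg_sq]
  · rw [zero_add]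
    have h1 : ∀ t ∈ Set.Icc (E - s) (E + s),
        ENNReal.ofReal (ε / ((t - l) ^ 2 + ε ^ 2)) ≤ ENNReal.ofReal (ε / s ^ 2) := fun t ht => by
      refine ENNReal.ofReal_le_ofReal (div_le_div_of_nonneg_left hε.le (by positivity) ?_)
      have h2 : s ≤ |t - l| := by
        have h3 : |t - E| ≤ s := abs_le.2 ⟨by linarith [ht.1], by linarith [ht.2]⟩
        have h4 : |l - E| ≤ |t - l| + |t - E| := by
          rw [abs_sub_comm t l]; exact abs_sub_le l t E
        push Not at h
        linarith
      have : s ^ 2 ≤ (t - l) ^ 2 := by rw [← sq_abs (t - l)]; gcongr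
      nlinarith [sq_nonneg ε]
    refine (setLIntegral_mono measurable_const h1).trans (le_of_eq ?_)
    rw [setLIntegral_const, Real.volume_Icc, ← ENNReal.ofReal_mul (by positivity)]
    congr 1
    field_simp
    ring

/-- Either the local density of states is at most that of a single level, or every minor has a
level nearby. -/
lemma lintegral_resolvent'_le_or {M : Matrix n n ℂ} (hM : M.IsHermitian) {E s ε : ℝ} (hs : 0 < s)
    (hε : 0 < ε) :
    ∫⁻ t in Set.Icc (E - s) (E + s), ∑ i, ENNReal.ofReal
        (-(resolvent' M ((t : ℝ) + ε * Complex.I) i i).im) ≤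
      ENNReal.ofReal Real.pi + Fintype.card n * ENNReal.ofReal (2 * ε / s) ∨
    ∀ i, MinorEig M i E (2 * s) := by
  by_cases h : ∃ k l, k ≠ l ∧ |hM.eigenvalues k - E| ≤ 2 * s ∧ |hM.eigenvalues l - E| ≤ 2 * s
  · obtain ⟨k, l, hkl, hk, hl⟩ := h
    exact Or.inr fun i => minorEig_of_two hM i hkl hk hl
  · left
    push Not at h
    have h1 : ∀ t : ℝ, ∑ i, ENNReal.ofReal (-(resolvent' M ((t : ℝ) + ε * Complex.I) i i).im) =
        ∑ k, ENNReal.ofReal (ε / ((t - hM.eigenvalues k) ^ 2 + ε ^ 2)) := fun t => by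
      have hz : 0 < ((t : ℂ) + ε * Complex.I).im := by simpa using hε
      rw [← ENNReal.ofReal_sum_of_nonneg fun i _ => neg_im_resolvent'_nonneg hM hz i,
        sum_neg_im_resolvent' hM hz, ENNReal.ofReal_sum_of_nonneg]
      · simp
      · intro k _; simp; positivity
    simp_rw [h1]
    rw [lintegral_finsetSum _ fun k _ => by fun_prop]
    refine (Finset.sum_le_sum fun k _ => lintegral_poisson_Icc_le hs hε).trans ?_
    rw [Finset.sum_add_distrib, Finset.sum_const, Finset.card_univ, nsmul_eq_mul]
    gcongr
    rw [← Finset.sum_filter, Finset.sum_const, nsmul_eq_mul]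
    have : (Finset.univ.filter fun k => |hM.eigenvalues k - E| ≤ 2 * s).card ≤ 1 := by
      rw [Finset.card_le_one]
      intro a ha b hb
      by_contra hab
      exact absurd (h a b hab (Finset.mem_filter.1 ha).2) (not_lt.2 (Finset.mem_filter.1 hb).2)
    calc _ ≤ ((1 : ℕ) : ENNReal) * ENNReal.ofReal Real.pi := by gcongr
      _ = _ := by simp

/-- Minors depend only on the entries off the distinguished row and column. -/
lemma MinorEig.congr {M M' : Matrix n n ℂ} {i : n} {m r : ℝ} (h : MinorEig M i m r)
    (hMM : ∀ j k, j ≠ i → k ≠ i → M j k = M' j k) : MinorEig M' i m r := by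
  obtain ⟨u, β, h1, h2, h3, h4⟩ := h
  refine ⟨u, β, h1, h2, h3, fun j hj => ?_⟩
  rw [← h4 j hj]
  refine Finset.sum_congr rfl fun k _ => ?_
  beta_reduce
  by_cases hk : k = i
  · simp [hk, h2]
  · rw [hMM j k hj hk]

lemma isClosed_minorEig (i : n) (m r : ℝ) :
    IsClosed {M : Matrix n n ℂ | MinorEig M i m r} := by
  have hK : IsCompact ((Metric.closedBall (0 : n → ℂ) 1) ×ˢ (Metric.closedBall m r)) :=
    (isCompact_closedBall _ _).prod (isCompact_closedBall _ _)
  have : CompactSpace ((Metric.closedBall (0 : n → ℂ) 1) ×ˢ (Metric.closedBall m r) :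
    Set ((n → ℂ) × ℝ)) := isCompact_iff_compactSpace.1 hK
  set S : Set (((Metric.closedBall (0 : n → ℂ) 1) ×ˢ (Metric.closedBall m r) :
    Set ((n → ℂ) × ℝ)) × Matrix n n ℂ) := {q | ∑ j, ‖q.1.1.1 j‖ ^ 2 = 1 ∧ q.1.1.1 i = 0 ∧
      ∀ j, j ≠ i → (q.2 *ᵥ q.1.1.1) j = q.1.1.2 * q.1.1.1 j} with hS
  have hc1 : ∀ j, Continuous fun q : (((Metric.closedBall (0 : n → ℂ) 1) ×ˢ
      (Metric.closedBall m r) : Set ((n → ℂ) × ℝ)) × Matrix n n ℂ) => q.1.1.1 j := fun j =>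
    (continuous_apply j).comp (continuous_fst.comp (continuous_subtype_val.comp continuous_fst))
  have hc2 : Continuous fun q : (((Metric.closedBall (0 : n → ℂ) 1) ×ˢ
      (Metric.closedBall m r) : Set ((n → ℂ) × ℝ)) × Matrix n n ℂ) => q.1.1.2 :=
    continuous_snd.comp (continuous_subtype_val.comp continuous_fst)
  have hSc : IsClosed S := by
    refine (isClosed_eq (by fun_prop) continuous_const).and ((isClosed_eq (hc1 i)
      continuous_const).and ?_)
    simp only [Set.ofPred_forall]
    refine isClosed_iInter fun j => isClosed_iInter fun _ => isClosed_eq ?_ ?_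
    · simp only [mulVec, dotProduct]
      refine continuous_finsetSum _ fun k _ => (Continuous.mul ?_ (hc1 k))
      exact (continuous_apply k).comp ((continuous_apply j).comp continuous_snd)
    · exact (Complex.continuous_ofReal.comp hc2).mul (hc1 j)
  have himg := isClosedMap_snd_of_compactSpace _ hSc
  convert himg using 1
  ext M
  constructor
  · rintro ⟨u, β, h1, h2, h3, h4⟩
    refine ⟨(⟨(u, β), ?_, ?_⟩, M), ⟨h1, h2, h4⟩, rfl⟩
    · rw [mem_closedBall_zero_iff, pi_norm_le_iff_of_nonneg zero_le_one]
      intro j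
      have := Finset.single_le_sum (f := fun j => ‖u j‖ ^ 2) (fun j _ => by positivity)
        (Finset.mem_univ j)
      rw [h1] at this
      exact (sq_le_one_iff₀ (norm_nonneg _)).1 this
    · exact h3
  · rintro ⟨⟨⟨⟨u, β⟩, hu, hβ⟩, M'⟩, ⟨h1, h2, h4⟩, rfl⟩
    exact ⟨u, β, h1, h2, hβ, h4⟩

/-- Joint measurability of resolvent entries. -/
lemma measurable_resolvent' {α : Type*} [MeasurableSpace α] {F : α → Matrix n n ℂ} {z : α → ℂ}
    (hF : ∀ j k, Measurable fun a => F a j k) (hz : Measurable z) (i j : n) :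
    Measurable fun a => resolvent' (F a) (z a) i j := by
  have hA : ∀ j k, Measurable fun a => (z a • (1 : Matrix n n ℂ) - F a) j k := fun j k => by
    simp only [Matrix.sub_apply, Matrix.smul_apply, smul_eq_mul]
    exact (hz.mul_const _).sub (hF j k)
  have hdet : ∀ B : α → Matrix n n ℂ, (∀ j k, Measurable fun a => B a j k) →
      Measurable fun a => (B a).det := fun B hB => by
    simp only [det_apply]
    exact Finset.measurable_sum _ fun σ _ =>
      (Finset.measurable_prod _ fun k _ => hB _ _).const_smul _
  simp only [resolvent', inv_def, Ring.inverse_eq_inv', Matrix.smul_apply, smul_eq_mul]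
  refine (hdet _ hA).inv.mul ?_
  simp only [adjugate_apply]
  refine hdet _ fun k l => ?_
  simp only [updateRow_apply]
  split_ifs
  · exact measurable_const
  · exact hA k l

end EnergyAverage

section Covariance

variable {L : Fin 3 → ℕ} [∀ i, NeZero (L i)]

lemma lap_mulVec (f : Torus L → ℝ) (x : Torus L) :
    (lap L *ᵥ f) x = ∑ i, (f (x + unitVec L i) + f (x - unitVec L i)) - 6 * f x := by
  simp only [lap, mulVec, dotProduct, of_apply, sub_mul, Finset.sum_sub_distrib, Finset.sum_mul,
    add_mul, ite_mul, one_mul, zero_mul, Finset.sum_ite_eq', Finset.mem_univ, if_true]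
  congr 1
  rw [Finset.sum_comm]
  refine Finset.sum_congr rfl fun i _ => ?_
  rw [Finset.sum_add_distrib]
  simp

lemma shifted_lap_mulVec (W : ℕ) (l : ℝ) (f : Torus L → ℝ) (x : Torus L) :
    ((((W : ℝ) ^ 2) • (-lap L) + l • (1 : Matrix (Torus L) (Torus L) ℝ)) *ᵥ f) x =
      l * f x - W ^ 2 * (∑ i, (f (x + unitVec L i) + f (x - unitVec L i)) - 6 * f x) := by
  rw [add_mulVec, smul_mulVec, neg_mulVec, smul_mulVec, one_mulVec, ← lap_mulVec]
  simp only [Pi.add_apply, Pi.smul_apply, Pi.neg_apply, smul_eq_mul]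
  ring

/-- The minimum principle. -/
lemma nonneg_of_shifted_lap (W : ℕ) {l : ℝ} (hl : 0 < l) {f : Torus L → ℝ}
    (h : ∀ x, 0 ≤ l * f x - (W : ℝ) ^ 2 *
      (∑ i, (f (x + unitVec L i) + f (x - unitVec L i)) - 6 * f x)) (x : Torus L) : 0 ≤ f x := by
  obtain ⟨y, hy⟩ := Finite.exists_min f
  refine le_trans ?_ (hy x)
  have h1 : 6 * f y ≤ ∑ i, (f (y + unitVec L i) + f (y - unitVec L i)) := by
    have : ∑ _i : Fin 3, (2 * f y) ≤ ∑ i, (f (y + unitVec L i) + f (y - unitVec L i)) :=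
      Finset.sum_le_sum fun i _ => by
        have := hy (y + unitVec L i); have := hy (y - unitVec L i); linarith
    simp at this ⊢
    linarith
  have h2 := h y
  have h3 : 0 ≤ (W : ℝ) ^ 2 * (∑ i, (f (y + unitVec L i) + f (y - unitVec L i)) - 6 * f y) :=
    mul_nonneg (by positivity) (by linarith)
  by_contra! hc
  nlinarith

lemma isUnit_det_shifted_lap (W : ℕ) :
    IsUnit ((((W : ℝ) ^ 2) • (-lap L) + (1 : Matrix (Torus L) (Torus L) ℝ))).det := by
  rw [isUnit_iff_ne_zero]
  intro h0
  obtain ⟨f, hf, hf0⟩ := exists_mulVec_eq_zero_iff.2 h0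
  apply hf
  have key := fun (g : Torus L → ℝ) (x : Torus L) => shifted_lap_mulVec W 1 g x
  simp only [one_smul] at key
  have h1 := nonneg_of_shifted_lap W one_pos (f := f) fun x => by rw [← key, hf0]; rfl
  have h2 := nonneg_of_shifted_lap W one_pos (f := -f) fun x => by
    rw [← key, mulVec_neg, hf0]; simp
  funext x
  have := h1 x; have := h2 x
  simp only [Pi.neg_apply, Pi.zero_apply] at *
  linarith

lemma Jmat_col (W : ℕ) (x y : Torus L) :
    1 * Jmat L W x y - (W : ℝ) ^ 2 * (∑ i, (Jmat L W (x + unitVec L i) y +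
      Jmat L W (x - unitVec L i) y) - 6 * Jmat L W x y) = if x = y then 1 else 0 := by
  have h := shifted_lap_mulVec W 1 (fun x => Jmat L W x y) x
  rw [one_smul] at h
  rw [← h]
  have h2 : (fun x => Jmat L W x y) = Jmat L W *ᵥ Pi.single y 1 := by
    rw [mulVec_single_one]; rfl
  rw [h2, mulVec_mulVec, Jmat, mul_nonsing_inv _ (isUnit_det_shifted_lap W), one_mulVec,
    Pi.single_apply]

lemma Jmat_nonneg (W : ℕ) (x y : Torus L) : 0 ≤ Jmat L W x y :=
  nonneg_of_shifted_lap W one_pos (f := fun x => Jmat L W x y)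
    (fun x => by rw [Jmat_col]; split_ifs <;> norm_num) x

lemma lap_add_right (a x y : Torus L) : lap L (x + a) (y + a) = lap L x y := by
  simp only [lap, of_apply]
  have h1 : ∀ i, (y + a = x + a + unitVec L i) = (y = x + unitVec L i) := fun i => by
    rw [add_right_comm, add_left_inj]
  have h2 : ∀ i, (y + a = x + a - unitVec L i) = (y = x - unitVec L i) := fun i => by
    rw [add_sub_right_comm, add_left_inj]
  simp only [h1, h2, add_left_inj]

lemma Jmat_add_right (W : ℕ) (a x y : Torus L) : Jmat L W (x + a) (y + a) = Jmat L W x y := by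
  have h : (((W : ℝ) ^ 2) • (-lap L) + 1).submatrix (Equiv.addRight a) (Equiv.addRight a) =
      (((W : ℝ) ^ 2) • (-lap L) + 1) := by
    ext x y
    simp [lap_add_right, one_apply]
  have h2 := inv_submatrix_equiv (((W : ℝ) ^ 2) • (-lap L) + 1) (Equiv.addRight a)
    (Equiv.addRight a)
  rw [h] at h2
  exact (congrFun (congrFun h2 x) y).symm

lemma lap_transpose : (lap L)ᵀ = lap L := by
  ext x y
  simp only [lap, of_apply, transpose_apply]
  congr 1
  · refine Finset.sum_congr rfl fun i _ => ?_
    rw [add_comm]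
    congr 1
    · simp only [eq_sub_iff_add_eq, eq_comm]
    · simp only [eq_sub_iff_add_eq, eq_comm]
  · simp only [eq_comm]

lemma Jmat_symm (W : ℕ) (x y : Torus L) : Jmat L W x y = Jmat L W y x := by
  have : (Jmat L W)ᵀ = Jmat L W := by
    rw [Jmat, transpose_nonsing_inv, transpose_add, transpose_smul, transpose_neg, lap_transpose,
      transpose_one]
  exact congrFun (congrFun this y) x

/-- Characters of the torus. -/
def torusChar (p x : Torus L) : ℂ := ∏ i, ZMod.stdAddChar (p i * x i)

lemma torusChar_add (p x y : Torus L) : torusChar p (x + y) = torusChar p x * torusChar p y := by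
  simp only [torusChar, ← Finset.prod_mul_distrib, Pi.add_apply, mul_add, AddChar.map_add_eq_mul]

lemma norm_torusChar (p x : Torus L) : ‖torusChar p x‖ = 1 := by
  rw [torusChar, norm_prod]
  exact Finset.prod_eq_one fun i _ => AddChar.norm_apply _ _

lemma torusChar_unitVec (p : Torus L) (i : Fin 3) :
    torusChar p (unitVec L i) = ZMod.stdAddChar (p i) := by
  rw [torusChar, Finset.prod_eq_single i]
  · simp [unitVec]
  · intro j _ hj; simp [unitVec, hj]
  · simp

lemma torusChar_neg_unitVec (p : Torus L) (i : Fin 3) :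
    torusChar p (-unitVec L i) = star (ZMod.stdAddChar (p i) : ℂ) := by
  rw [torusChar, Finset.prod_eq_single i]
  · simp only [unitVec, Pi.neg_apply, if_true, mul_neg, mul_one]
    rw [AddChar.map_neg_eq_conj]; rfl
  · intro j _ hj; simp [unitVec, hj]
  · simp

lemma sum_torusChar (x : Torus L) :
    ∑ p : Torus L, torusChar p x = if x = 0 then (Fintype.card (Torus L) : ℂ) else 0 := by
  have h : ∑ p : Torus L, torusChar p x = ∏ i, ∑ m : ZMod (L i), (ZMod.stdAddChar (m * x i) : ℂ) := by
    rw [Finset.prod_univ_sum]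
    simp [torusChar, Fintype.piFinset_univ]
  rw [h]
  have h2 : ∀ i, ∑ m : ZMod (L i), (ZMod.stdAddChar (m * x i) : ℂ) =
      if x i = 0 then (Fintype.card (ZMod (L i)) : ℂ) else 0 := fun i => by
    rw [AddChar.sum_mulShift (x i) (ZMod.isPrimitive_stdAddChar (L i))]
    split_ifs <;> simp
  simp_rw [h2]
  split_ifs with hx
  · simp [hx, Fintype.card_pi]
  · obtain ⟨i, hi⟩ := Function.ne_iff.1 hx
    exact Finset.prod_eq_zero (Finset.mem_univ i) (if_neg hi)

/-- The eigenvalue of `2 - W²Δ` at momentum `p`. -/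
def lapEig (L : Fin 3 → ℕ) [∀ i, NeZero (L i)] (W : ℕ) (p : Torus L) : ℝ :=
  2 + (W : ℝ) ^ 2 * ∑ i, (2 - 2 * (ZMod.stdAddChar (p i) : ℂ).re)

lemma stdAddChar_re_le {n : ℕ} [NeZero n] (m : ZMod n) :
    16 * (m.valMinAbs : ℝ) ^ 2 / n ^ 2 ≤ 2 - 2 * (ZMod.stdAddChar m : ℂ).re := by
  have hn : (0 : ℝ) < n := Nat.cast_pos.2 (NeZero.pos n)
  have h1 : (ZMod.stdAddChar m : ℂ).re = Real.cos (2 * Real.pi * m.valMinAbs / n) := by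
    conv_lhs => rw [← ZMod.coe_valMinAbs m, ZMod.stdAddChar_coe]
    rw [← Complex.exp_ofReal_mul_I_re]
    congr 2
    push_cast; ring
  have h2 : |2 * Real.pi * (m.valMinAbs : ℝ) / n| ≤ Real.pi := by
    have h3 := m.valMinAbs_mem_Ioc
    have h4 : |(m.valMinAbs : ℝ)| * 2 ≤ n := by
      have : |m.valMinAbs| * 2 ≤ n := by
        rw [← abs_two, ← abs_mul]; exact abs_le.2 ⟨h3.1.le, h3.2⟩
      exact_mod_cast this
    rw [abs_div, abs_mul, abs_of_pos hn, abs_of_pos (by positivity : 0 < 2 * Real.pi),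
      div_le_iff₀ hn]
    nlinarith [Real.pi_pos]
  have h5 := Real.cos_le_one_sub_mul_cos_sq h2
  rw [h1]
  have h6 : 2 / Real.pi ^ 2 * (2 * Real.pi * (m.valMinAbs : ℝ) / n) ^ 2 =
      8 * (m.valMinAbs : ℝ) ^ 2 / n ^ 2 := by
    field_simp; ring
  rw [h6] at h5
  have : 16 * (m.valMinAbs : ℝ) ^ 2 / n ^ 2 = 2 * (8 * (m.valMinAbs : ℝ) ^ 2 / n ^ 2) := by ring
  linarith

lemma lapEig_ge {W : ℕ} (hL : ∀ i, L i ≤ W) (p : Torus L) :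
    2 * (1 + 8 * ∑ i, ((p i).valMinAbs : ℝ) ^ 2) ≤ lapEig L W p := by
  rw [lapEig]
  have : ∑ i, 16 * ((p i).valMinAbs : ℝ) ^ 2 ≤
      (W : ℝ) ^ 2 * ∑ i, (2 - 2 * (ZMod.stdAddChar (p i) : ℂ).re) := by
    rw [Finset.mul_sum]
    refine Finset.sum_le_sum fun i _ => ?_
    have h1 := stdAddChar_re_le (p i)
    have hn : (0 : ℝ) < L i := Nat.cast_pos.2 (NeZero.pos _)
    have hW : (L i : ℝ) ≤ W := Nat.cast_le.2 (hL i)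
    rw [div_le_iff₀ (by positivity)] at h1
    have h0 : 0 ≤ 2 - 2 * (ZMod.stdAddChar (p i) : ℂ).re :=
      (by positivity : (0 : ℝ) ≤ _).trans (stdAddChar_re_le (p i))
    have : (L i : ℝ) ^ 2 ≤ (W : ℝ) ^ 2 := by gcongr
    nlinarith
  rw [← Finset.mul_sum] at this
  linarith

lemma sum_Icc_inv_sq_le (K : ℕ) :
    ∑ k ∈ Finset.Icc (-(K : ℤ)) K, ((1 + 8 * (k : ℝ) ^ 2) ^ 2)⁻¹ ≤
      (17 / 16 - 1 / 16 / (K + 1) : ℝ) := by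
  induction K with
  | zero => norm_num
  | succ K ih =>
    have h : Finset.Icc (-((K + 1 : ℕ) : ℤ)) ((K + 1 : ℕ) : ℤ) =
        insert (-((K + 1 : ℕ) : ℤ)) (insert ((K + 1 : ℕ) : ℤ) (Finset.Icc (-(K : ℤ)) K)) := by
      ext k; simp only [Finset.mem_Icc, Finset.mem_insert]; omega
    rw [h, Finset.sum_insert (by simp; omega), Finset.sum_insert (by simp)]
    push_cast
    rw [neg_sq]
    have hk : (0 : ℝ) ≤ K := Nat.cast_nonneg K
    have : 2 * ((1 + 8 * ((K : ℝ) + 1) ^ 2) ^ 2)⁻¹ ≤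
        1 / 16 / ((K : ℝ) + 1) - 1 / 16 / ((K : ℝ) + 1 + 1) := by
      rw [← div_eq_mul_inv, div_sub_div _ _ (by positivity) (by positivity),
        div_le_div_iff₀ (by positivity) (by positivity)]
      nlinarith [pow_nonneg hk 2, pow_nonneg hk 3, pow_nonneg hk 4]
    linarith

lemma sum_zmod_inv_sq_le (n : ℕ) [NeZero n] :
    ∑ m : ZMod n, ((1 + 8 * (m.valMinAbs : ℝ) ^ 2) ^ 2)⁻¹ ≤ 17 / 16 := by
  have h1 : ∑ m : ZMod n, ((1 + 8 * (m.valMinAbs : ℝ) ^ 2) ^ 2)⁻¹ ≤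
      ∑ k ∈ Finset.Icc (-(n : ℤ)) n, ((1 + 8 * (k : ℝ) ^ 2) ^ 2)⁻¹ := by
    rw [← Finset.sum_image (s := Finset.univ) (g := fun m : ZMod n => m.valMinAbs)
      (f := fun k : ℤ => ((1 + 8 * (k : ℝ) ^ 2) ^ 2)⁻¹)
      (fun a _ b _ hab => ZMod.injective_valMinAbs hab)]
    refine Finset.sum_le_sum_of_subset_of_nonneg ?_ fun _ _ _ => by positivity
    intro k hk
    obtain ⟨m, -, rfl⟩ := Finset.mem_image.1 hk
    have := m.valMinAbs_mem_Ioc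
    have hn := NeZero.pos n
    simp only [Set.mem_Ioc, Finset.mem_Icc] at *
    omega
  have h2 := sum_Icc_inv_sq_le n
  have : 0 ≤ (1 : ℝ) / 16 / (n + 1) := by positivity
  linarith

lemma sum_lapEig_inv_le {W : ℕ} (hL : ∀ i, L i ≤ W) :
    ∑ p : Torus L, (lapEig L W p ^ 6)⁻¹ ≤ 2⁻¹ ^ 6 * (17 / 16) ^ 3 := by
  have h1 : ∀ p : Torus L, (lapEig L W p ^ 6)⁻¹ ≤
      2⁻¹ ^ 6 * ∏ i, ((1 + 8 * ((p i).valMinAbs : ℝ) ^ 2) ^ 2)⁻¹ := fun p => by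
    have h2 := lapEig_ge hL p
    have h3 : ∀ i, (1 + 8 * ((p i).valMinAbs : ℝ) ^ 2) ≤ 1 + 8 * ∑ i, ((p i).valMinAbs : ℝ) ^ 2 :=
      fun i => by
        have := Finset.single_le_sum (f := fun i => ((p i).valMinAbs : ℝ) ^ 2)
          (fun j _ => by positivity) (Finset.mem_univ i)
        linarith
    have h4 : ∏ i, (1 + 8 * ((p i).valMinAbs : ℝ) ^ 2) ≤
        (1 + 8 * ∑ i, ((p i).valMinAbs : ℝ) ^ 2) ^ 3 := by
      refine (Finset.prod_le_prod (fun i _ => by positivity) fun i _ => h3 i).trans (le_of_eq ?_)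
      simp
    rw [Finset.prod_inv_distrib, Finset.prod_pow, inv_pow, ← mul_inv]
    refine inv_anti₀ (by positivity) ?_
    calc _ ≤ 2 ^ 6 * ((1 + 8 * ∑ i, ((p i).valMinAbs : ℝ) ^ 2) ^ 3) ^ 2 := by gcongr
      _ = (2 * (1 + 8 * ∑ i, ((p i).valMinAbs : ℝ) ^ 2)) ^ 6 := by ring
      _ ≤ _ := by gcongr
  refine (Finset.sum_le_sum fun p _ => h1 p).trans ?_
  rw [← Finset.mul_sum]
  gcongr
  have h5 := Finset.prod_univ_sum (fun i : Fin 3 => (Finset.univ : Finset (ZMod (L i))))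
    (fun i m => ((1 + 8 * ((m : ZMod (L i)).valMinAbs : ℝ) ^ 2) ^ 2)⁻¹)
  rw [Fintype.piFinset_univ] at h5
  rw [← h5]
  refine (Finset.prod_le_prod (fun i _ => Finset.sum_nonneg fun _ _ => by positivity)
    fun i _ => sum_zmod_inv_sq_le (L i)).trans (le_of_eq ?_)
  rw [Finset.prod_const, Finset.card_univ, Fintype.card_fin]

/-- The kernel of `(2 - W²Δ)^{-k}`, through its Fourier expansion. -/
def powKernel (L : Fin 3 → ℕ) [∀ i, NeZero (L i)] (W k : ℕ) (x : Torus L) : ℝ :=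
  (Fintype.card (Torus L) : ℝ)⁻¹ * ∑ p : Torus L, (lapEig L W p ^ k)⁻¹ * (torusChar p x).re

lemma powKernel_zero (W : ℕ) (x : Torus L) : powKernel L W 0 x = if x = 0 then 1 else 0 := by
  have h := congrArg Complex.re (sum_torusChar x)
  rw [Complex.re_sum] at h
  simp only [powKernel, pow_zero, inv_one, one_mul, h]
  have : (Fintype.card (Torus L) : ℝ) ≠ 0 := Nat.cast_ne_zero.2 Fintype.card_ne_zero
  split_ifs
  · rw [Complex.natCast_re, inv_mul_cancel₀ this]
  · simp

lemma powKernel_succ {W : ℕ} (hL : ∀ i, L i ≤ W) (k : ℕ) (x : Torus L) :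
    2 * powKernel L W (k + 1) x - (W : ℝ) ^ 2 * (∑ i, (powKernel L W (k + 1) (x + unitVec L i) +
      powKernel L W (k + 1) (x - unitVec L i)) - 6 * powKernel L W (k + 1) x) =
      powKernel L W k x := by
  have h1 : ∀ p : Torus L, ∀ i, (torusChar p (x + unitVec L i)).re +
      (torusChar p (x - unitVec L i)).re =
        (torusChar p x).re * (2 * (ZMod.stdAddChar (p i) : ℂ).re) := fun p i => by
    rw [sub_eq_add_neg, torusChar_add, torusChar_add, torusChar_unitVec, torusChar_neg_unitVec]
    simp [Complex.mul_re]
    ring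
  have h2 : ∀ i, powKernel L W (k + 1) (x + unitVec L i) + powKernel L W (k + 1) (x - unitVec L i) =
      (Fintype.card (Torus L) : ℝ)⁻¹ * ∑ p : Torus L, (lapEig L W p ^ (k + 1))⁻¹ *
        ((torusChar p x).re * (2 * (ZMod.stdAddChar (p i) : ℂ).re)) := fun i => by
    simp only [powKernel]
    rw [← mul_add, ← Finset.sum_add_distrib]
    simp_rw [← mul_add, h1]
  simp_rw [h2]
  rw [← Finset.mul_sum, Finset.sum_comm]
  simp only [powKernel]
  rw [mul_left_comm 2, mul_left_comm 6, ← mul_sub, mul_left_comm ((W : ℝ) ^ 2), ← mul_sub]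
  congr 1
  rw [Finset.mul_sum, Finset.mul_sum, ← Finset.sum_sub_distrib, Finset.mul_sum,
    ← Finset.sum_sub_distrib]
  refine Finset.sum_congr rfl fun p _ => ?_
  have hpos : 0 < lapEig L W p := lt_of_lt_of_le (by positivity) (lapEig_ge hL p)
  have h3 : lapEig L W p = 2 + (W : ℝ) ^ 2 * (6 - 2 * ∑ i, (ZMod.stdAddChar (p i) : ℂ).re) := by
    rw [lapEig, Finset.sum_sub_distrib, Finset.mul_sum]; norm_num
  rw [← Finset.mul_sum, ← Finset.mul_sum, ← Finset.mul_sum, pow_succ, mul_inv]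
  have h4 : (lapEig L W p)⁻¹ * (2 + (W : ℝ) ^ 2 * (6 - 2 * ∑ i, (ZMod.stdAddChar (p i) : ℂ).re)) =
      1 := by rw [← h3, inv_mul_cancel₀ hpos.ne']
  linear_combination ((lapEig L W p ^ k)⁻¹ * (torusChar p x).re) * h4

lemma powKernel_le_Jmat {W : ℕ} (hL : ∀ i, L i ≤ W) (k : ℕ) (x y : Torus L) :
    powKernel L W (k + 1) (x - y) ≤ Jmat L W x y := by
  have main : ∀ k, (∀ x, powKernel L W k (x - y) ≤ Jmat L W x y + if x = y then 1 else 0) →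
      ∀ x, powKernel L W (k + 1) (x - y) ≤ Jmat L W x y := fun k hk x => by
    rw [← sub_nonneg]
    refine nonneg_of_shifted_lap W two_pos
      (f := fun x => Jmat L W x y - powKernel L W (k + 1) (x - y)) (fun x => ?_) x
    have e1 := Jmat_col W x y
    have e2 := powKernel_succ hL k (x - y)
    have h := hk x
    have e3 : ∀ i, x + unitVec L i - y = x - y + unitVec L i := fun i => by abel
    have e4 : ∀ i, x - unitVec L i - y = x - y - unitVec L i := fun i => by abel
    simp only [e3, e4]
    have e5 : ∑ i, (Jmat L W (x + unitVec L i) y - powKernel L W (k + 1) (x - y + unitVec L i) +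
        (Jmat L W (x - unitVec L i) y - powKernel L W (k + 1) (x - y - unitVec L i))) =
        ∑ i, (Jmat L W (x + unitVec L i) y + Jmat L W (x - unitVec L i) y) -
        ∑ i, (powKernel L W (k + 1) (x - y + unitVec L i) +
          powKernel L W (k + 1) (x - y - unitVec L i)) := by
      rw [← Finset.sum_sub_distrib]
      exact Finset.sum_congr rfl fun i _ => by ring
    rw [e5]
    linarith
  induction k generalizing x with
  | zero =>
    refine main 0 (fun x => ?_) x
    rw [powKernel_zero]
    simp only [sub_eq_zero]
    have := Jmat_nonneg W x y
    linarith
  | succ k ih =>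
    refine main (k + 1) (fun x => ?_) x
    have := ih x
    split_ifs <;> linarith

/-- The covariance profile is bounded below by a constant multiple of the uniform one. -/
lemma Jmat_ge {W : ℕ} (hL : ∀ i, L i ≤ W) (x y : Torus L) :
    1 / 128 / (Fintype.card (Torus L) : ℝ) ≤ Jmat L W x y := by
  refine le_trans ?_ (powKernel_le_Jmat hL 5 x y)
  have hpos : ∀ p : Torus L, 0 < lapEig L W p := fun p =>
    lt_of_lt_of_le (by positivity) (lapEig_ge hL p)
  rw [powKernel, div_eq_inv_mul]
  gcongr
  have h0 : (lapEig L W (0 : Torus L)) = 2 := by simp [lapEig]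
  have hs := sum_lapEig_inv_le hL
  rw [← Finset.add_sum_erase _ _ (Finset.mem_univ (0 : Torus L)), h0] at hs ⊢
  have hc : (torusChar 0 (x - y)).re = 1 := by simp [torusChar]
  have h1 : ∀ p : Torus L, -(lapEig L W p ^ 6)⁻¹ ≤
      (lapEig L W p ^ (5 + 1))⁻¹ * (torusChar p (x - y)).re := fun p => by
    have h2 : -1 ≤ (torusChar p (x - y)).re := by
      have := Complex.abs_re_le_norm (torusChar p (x - y))
      rw [norm_torusChar] at this
      exact (abs_le.1 this).1
    have h3 : 0 < (lapEig L W p ^ 6)⁻¹ := inv_pos.2 (pow_pos (hpos p) 6)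
    nlinarith
  have h4 := Finset.sum_le_sum (s := Finset.univ.erase (0 : Torus L)) fun p _ => h1 p
  rw [Finset.sum_neg_distrib] at h4
  rw [hc]
  norm_num at hs ⊢
  norm_num at h4
  linarith

lemma Jmat_pos {W : ℕ} (hL : ∀ i, L i ≤ W) (x y : Torus L) : 0 < Jmat L W x y :=
  lt_of_lt_of_le (by have := Fintype.card_pos (α := Torus L); positivity) (Jmat_ge hL x y)

end Covariance

section BandMatrix

variable {L : Fin 3 → ℕ} [∀ i, NeZero (L i)]

lemma siteIdx_injective : Function.Injective (siteIdx L) := fun _ _ h =>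
  (Fintype.equivFin (Torus L)).injective (Fin.ext h)

lemma Hmat_diag (W : ℕ) (ω : Config L) (x : Torus L) :
    Hmat L W ω x x = ((Real.sqrt (Jmat L W x x) * ω (x, x) : ℝ) : ℂ) := by
  simp [Hmat]

lemma Hmat_of_lt (W : ℕ) (ω : Config L) {x y : Torus L} (h : siteIdx L x < siteIdx L y) :
    Hmat L W ω x y = ((Real.sqrt (Jmat L W x y / 2) : ℝ) : ℂ) *
      ((ω (x, y) : ℂ) + Complex.I * (ω (y, x) : ℂ)) := by
  have hne : x ≠ y := fun e => by simp [e] at h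
  simp [Hmat, hne, h]

lemma Hmat_of_gt (W : ℕ) (ω : Config L) {x y : Torus L} (h : siteIdx L y < siteIdx L x) :
    Hmat L W ω x y = ((Real.sqrt (Jmat L W x y / 2) : ℝ) : ℂ) *
      ((ω (y, x) : ℂ) - Complex.I * (ω (x, y) : ℂ)) := by
  have hne : x ≠ y := fun e => by simp [e] at h
  simp [Hmat, hne, not_lt.2 h.le]

lemma site_trichotomy (x y : Torus L) :
    siteIdx L x < siteIdx L y ∨ x = y ∨ siteIdx L y < siteIdx L x := by
  rcases lt_trichotomy (siteIdx L x) (siteIdx L y) with h | h | h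
  · exact .inl h
  · exact .inr (.inl (siteIdx_injective h))
  · exact .inr (.inr h)

lemma Hmat_isHermitian (W : ℕ) (ω : Config L) : (Hmat L W ω).IsHermitian := by
  ext x y
  rw [conjTranspose_apply]
  rcases site_trichotomy x y with h | rfl | h
  · rw [Hmat_of_lt W ω h, Hmat_of_gt W ω h, Jmat_symm W x y]
    simp
  · simp [Hmat_diag]
  · rw [Hmat_of_gt W ω h, Hmat_of_lt W ω h, Jmat_symm W x y]
    simp [sub_eq_add_neg]

lemma Hmat_add (W : ℕ) (ω v : Config L) : Hmat L W (ω + v) = Hmat L W ω + Hmat L W v := by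
  ext x y
  rw [Matrix.add_apply]
  rcases site_trichotomy x y with h | rfl | h
  · simp only [Hmat_of_lt W _ h, Pi.add_apply]; push_cast; ring
  · simp only [Hmat_diag, Pi.add_apply]; push_cast; ring
  · simp only [Hmat_of_gt W _ h, Pi.add_apply]; push_cast; ring

lemma Hmat_smul (W : ℕ) (t : ℝ) (v : Config L) : Hmat L W (t • v) = (t : ℂ) • Hmat L W v := by
  ext x y
  rw [Matrix.smul_apply, smul_eq_mul]
  rcases site_trichotomy x y with h | rfl | h
  · simp only [Hmat_of_lt W _ h, Pi.smul_apply, smul_eq_mul]; push_cast; ring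
  · simp only [Hmat_diag, Pi.smul_apply, smul_eq_mul]; push_cast; ring
  · simp only [Hmat_of_gt W _ h, Pi.smul_apply, smul_eq_mul]; push_cast; ring

lemma Hmat_sub (W : ℕ) (ω v : Config L) : Hmat L W (ω - v) = Hmat L W ω - Hmat L W v := by
  have h := Hmat_smul W (-1) v
  rw [sub_eq_add_neg, ← neg_one_smul ℝ v, Hmat_add, h]
  simp [sub_eq_add_neg]

lemma measurable_Hmat_apply (W : ℕ) (x y : Torus L) : Measurable fun ω => Hmat L W ω x y := by
  rcases site_trichotomy x y with h | rfl | h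
  · simp only [Hmat_of_lt W _ h]; fun_prop
  · simp only [Hmat_diag]; fun_prop
  · simp only [Hmat_of_gt W _ h]; fun_prop

lemma continuous_Hmat (W : ℕ) : Continuous fun ω : Config L => Hmat L W ω := by
  refine continuous_matrix fun x y => ?_
  rcases site_trichotomy x y with h | rfl | h
  · simp only [Hmat_of_lt W _ h]; fun_prop
  · simp only [Hmat_diag]; fun_prop
  · simp only [Hmat_of_gt W _ h]; fun_prop

lemma measurable_resolvent'_Hmat (W : ℕ) {α : Type*} [MeasurableSpace α] {f : α → Config L}
    {z : α → ℂ} (hf : Measurable f) (hz : Measurable z) (x y : Torus L) :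
    Measurable fun a => resolvent' (Hmat L W (f a)) (z a) x y :=
  measurable_resolvent' (fun j k => (measurable_Hmat_apply W j k).comp hf) hz x y

/-- Coordinates of a Hermitian matrix with respect to the parametrization `Hmat`. -/
def hermConfig (L : Fin 3 → ℕ) [∀ i, NeZero (L i)] (W : ℕ) (B : Matrix (Torus L) (Torus L) ℂ) :
    Config L := fun e =>
  if e.1 = e.2 then (B e.1 e.1).re / Real.sqrt (Jmat L W e.1 e.1)
  else if siteIdx L e.1 < siteIdx L e.2 then (B e.1 e.2).re / Real.sqrt (Jmat L W e.1 e.2 / 2)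
  else (B e.2 e.1).im / Real.sqrt (Jmat L W e.2 e.1 / 2)

lemma hermConfig_diag (W : ℕ) (B : Matrix (Torus L) (Torus L) ℂ) (x : Torus L) :
    hermConfig L W B (x, x) = (B x x).re / Real.sqrt (Jmat L W x x) := by
  simp [hermConfig]

lemma hermConfig_of_lt (W : ℕ) (B : Matrix (Torus L) (Torus L) ℂ) {x y : Torus L}
    (h : siteIdx L x < siteIdx L y) :
    hermConfig L W B (x, y) = (B x y).re / Real.sqrt (Jmat L W x y / 2) := by
  have hne : x ≠ y := fun e => by simp [e] at h
  simp [hermConfig, hne, h]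

lemma hermConfig_of_gt (W : ℕ) (B : Matrix (Torus L) (Torus L) ℂ) {x y : Torus L}
    (h : siteIdx L y < siteIdx L x) :
    hermConfig L W B (x, y) = (B y x).im / Real.sqrt (Jmat L W y x / 2) := by
  have hne : x ≠ y := fun e => by simp [e] at h
  simp [hermConfig, hne, not_lt.2 h.le]

lemma Hmat_hermConfig {W : ℕ} (hL : ∀ i, L i ≤ W) {B : Matrix (Torus L) (Torus L) ℂ}
    (hB : B.IsHermitian) : Hmat L W (hermConfig L W B) = B := by
  ext x y
  have hJ : ∀ x y, Real.sqrt (Jmat L W x y / 2) ≠ 0 := fun x y =>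
    (Real.sqrt_pos.2 (half_pos (Jmat_pos hL x y))).ne'
  rcases site_trichotomy x y with h | rfl | h
  · rw [Hmat_of_lt W _ h, hermConfig_of_lt W _ h, hermConfig_of_gt W _ h]
    have := Complex.ofReal_ne_zero.2 (hJ x y)
    conv_rhs => rw [← Complex.re_add_im (B x y)]
    push_cast
    field_simp
  · rw [Hmat_diag, hermConfig_diag, mul_div_cancel₀ _ (Real.sqrt_pos.2 (Jmat_pos hL x x)).ne']
    exact hB.coe_re_apply_self x
  · rw [Hmat_of_gt W _ h, hermConfig_of_lt W _ h, hermConfig_of_gt W _ h, Jmat_symm W x y,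
      ← hB.apply x y]
    have := Complex.ofReal_ne_zero.2 (hJ y x)
    conv_rhs => rw [← Complex.re_add_im (B y x)]
    simp only [star_add, star_mul', RCLike.star_def, Complex.conj_ofReal, Complex.conj_I]
    push_cast
    field_simp
    ring

lemma sum_hermConfig_sq_le {W : ℕ} (hL : ∀ i, L i ≤ W) {B : Matrix (Torus L) (Torus L) ℂ}
    (hB : B.IsHermitian) :
    ∑ e, hermConfig L W B e ^ 2 ≤ 128 * Fintype.card (Torus L) * ∑ x, ∑ y, ‖B x y‖ ^ 2 := by
  have hN : (0 : ℝ) < Fintype.card (Torus L) := by exact_mod_cast Fintype.card_pos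
  have hJ : ∀ x y, ∀ a : ℝ, 0 ≤ a →
      a / Jmat L W x y ≤ 128 * Fintype.card (Torus L) * a := fun x y a ha => by
    have h1 := Jmat_ge hL x y
    rw [div_le_iff₀ (Jmat_pos hL x y)]
    have : 1 ≤ 128 * Fintype.card (Torus L) * Jmat L W x y := by
      calc (1 : ℝ) = 128 * Fintype.card (Torus L) * (1 / 128 / Fintype.card (Torus L)) := by
            field_simp
        _ ≤ _ := by gcongr
    nlinarith
  have hlt : ∀ x y, siteIdx L x < siteIdx L y →
      hermConfig L W B (x, y) ^ 2 + hermConfig L W B (y, x) ^ 2 ≤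
        128 * Fintype.card (Torus L) * (‖B x y‖ ^ 2 + ‖B y x‖ ^ 2) := fun x y h => by
    have h1 : ‖B y x‖ = ‖B x y‖ := by rw [← hB.apply y x, norm_star]
    rw [hermConfig_of_lt W _ h, hermConfig_of_gt W _ h, div_pow, div_pow,
      Real.sq_sqrt (half_pos (Jmat_pos hL x y)).le, h1, Complex.sq_norm, Complex.normSq_apply]
    refine le_trans (le_of_eq ?_)
      (hJ x y _ (add_nonneg (add_nonneg (mul_self_nonneg _) (mul_self_nonneg _))
        (add_nonneg (mul_self_nonneg _) (mul_self_nonneg _))))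
    have := (Jmat_pos hL x y).ne'
    field_simp
    ring
  have hsym : ∀ x y, hermConfig L W B (x, y) ^ 2 + hermConfig L W B (y, x) ^ 2 ≤
        128 * Fintype.card (Torus L) * (‖B x y‖ ^ 2 + ‖B y x‖ ^ 2) := fun x y => by
    rcases site_trichotomy x y with h | rfl | h
    · exact hlt x y h
    · rw [← two_mul, ← two_mul, hermConfig_diag, div_pow, Real.sq_sqrt (Jmat_pos hL x x).le,
        mul_left_comm]
      gcongr
      refine le_trans ?_ (hJ x x _ (by positivity))
      gcongr ?_ / _
      · exact (Jmat_pos hL x x).le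
      · rw [← sq_abs]; gcongr; exact Complex.abs_re_le_norm _
    · have := hlt y x h
      linarith
  have hsum := Finset.sum_le_sum fun x (_ : x ∈ Finset.univ) =>
    Finset.sum_le_sum fun y (_ : y ∈ Finset.univ) => hsym x y
  simp only [Finset.sum_add_distrib, ← Finset.mul_sum] at hsum
  rw [Finset.sum_comm (f := fun x y => hermConfig L W B (y, x) ^ 2),
    Finset.sum_comm (f := fun x y => ‖B y x‖ ^ 2)] at hsum
  rw [Fintype.sum_prod_type]
  linarith

lemma measurable_hermConfig (W : ℕ) {α : Type*} [MeasurableSpace α]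
    {F : α → Matrix (Torus L) (Torus L) ℂ} (hF : ∀ x y, Measurable fun a => F a x y) :
    Measurable fun a => hermConfig L W (F a) := by
  refine measurable_pi_iff.2 fun ⟨x, y⟩ => ?_
  rcases site_trichotomy x y with h | rfl | h
  · simp only [hermConfig_of_lt W _ h]; fun_prop
  · simp only [hermConfig_diag]; fun_prop
  · simp only [hermConfig_of_gt W _ h]; fun_prop

lemma sum_hermConfig_smul_one_le {W : ℕ} (hL : ∀ i, L i ≤ W) {u : ℝ}
    (hu : |u| ≤ 1 / Fintype.card (Torus L)) :
    ∑ e, hermConfig L W ((u : ℂ) • 1) e ^ 2 ≤ 2 * 64 := by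
  have hN : (0 : ℝ) < Fintype.card (Torus L) := by exact_mod_cast Fintype.card_pos
  have hB : (((u : ℂ) • 1 : Matrix (Torus L) (Torus L) ℂ)).IsHermitian := by
    simp [IsHermitian, conjTranspose_smul]
  refine (sum_hermConfig_sq_le hL hB).trans ?_
  have h1 : ∑ x : Torus L, ∑ y : Torus L,
      ‖((u : ℂ) • 1 : Matrix (Torus L) (Torus L) ℂ) x y‖ ^ 2 =
      Fintype.card (Torus L) * u ^ 2 := by
    have : ∀ x y : Torus L, ‖((u : ℂ) • 1 : Matrix (Torus L) (Torus L) ℂ) x y‖ ^ 2 =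
        if x = y then u ^ 2 else 0 := fun x y => by
      by_cases h : x = y <;> simp [h, one_apply]
    simp only [this, Finset.sum_ite_eq, Finset.mem_univ, if_true, Finset.sum_const, nsmul_eq_mul,
      Finset.card_univ]
  rw [h1]
  have h2 : u ^ 2 ≤ (1 / Fintype.card (Torus L) : ℝ) ^ 2 := by
    rw [← sq_abs]; gcongr
  calc _ ≤ 128 * (Fintype.card (Torus L) : ℝ) *
        (Fintype.card (Torus L) * (1 / Fintype.card (Torus L) : ℝ) ^ 2) := by gcongr
    _ = _ := by field_simp; norm_num

lemma sum_hermConfig_rankTwo_le {W : ℕ} (hL : ∀ i, L i ≤ W) {i : Torus L} {u : Torus L → ℂ}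
    (hu1 : ∑ j, ‖u j‖ ^ 2 = 1) (hui : u i = 0) {ζ : ℂ}
    (hζ : ‖ζ‖ ^ 2 ≤ 1 / (128 * Fintype.card (Torus L))) :
    ∑ e, hermConfig L W (rankTwo i u ζ) e ^ 2 ≤ 2 * 1 := by
  have hN : (0 : ℝ) < Fintype.card (Torus L) := by exact_mod_cast Fintype.card_pos
  refine (sum_hermConfig_sq_le hL (rankTwo_isHermitian i u ζ)).trans ?_
  have h1 : ∀ j k, ‖rankTwo i u ζ j k‖ ^ 2 =
      (if k = i then ‖ζ‖ ^ 2 * ‖u j‖ ^ 2 else 0) + (if j = i then ‖ζ‖ ^ 2 * ‖u k‖ ^ 2 else 0) :=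
    fun j k => by
      by_cases hk : k = i <;> by_cases hj : j = i <;> simp [rankTwo, hk, hj, hui, mul_pow]
  have h2 : ∑ j, ∑ k, ‖rankTwo i u ζ j k‖ ^ 2 = 2 * ‖ζ‖ ^ 2 := by
    simp only [h1, Finset.sum_add_distrib, Finset.sum_ite_eq', Finset.mem_univ, if_true,
      ← Finset.mul_sum, hu1]
    rw [Finset.sum_comm]
    simp only [Finset.sum_ite_eq', Finset.mem_univ, if_true, ← Finset.mul_sum, hu1]
    ring
  rw [h2]
  calc _ ≤ 128 * (Fintype.card (Torus L) : ℝ) *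
        (2 * (1 / (128 * Fintype.card (Torus L)))) := by gcongr
    _ = _ := by field_simp

lemma hermConfig_rankTwo_eq_zero (W : ℕ) {i : Torus L} (u : Torus L → ℂ) (ζ : ℂ)
    {e : Torus L × Torus L} (he : ¬ (e.1 = i ∨ e.2 = i)) :
    hermConfig L W (rankTwo i u ζ) e = 0 := by
  obtain ⟨h1, h2⟩ := not_or.1 he
  simp [hermConfig, rankTwo, h1, h2]

end BandMatrix

section Averages

variable {L : Fin 3 → ℕ} [∀ i, NeZero (L i)]

lemma Hmat_apply_congr (W : ℕ) {ω ω' : Config L} {x y : Torus L} (h1 : ω (x, y) = ω' (x, y))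
    (h2 : ω (y, x) = ω' (y, x)) : Hmat L W ω x y = Hmat L W ω' x y := by
  simp only [Hmat, of_apply, h1, h2]
  split_ifs with h
  · subst h; rw [h1]
  · rfl
  · rfl

lemma lintegral_minorEig_resolvent'_le {W : ℕ} (hL : ∀ i, L i ≤ W) (i : Torus L)
    {E E' s ε ρ : ℝ} (hE : |E' - E| ≤ s) (hε : 0 < ε) (hρ : 0 < ρ)
    (hρ2 : ρ ^ 2 ≤ 1 / (128 * Fintype.card (Torus L))) :
    ∫⁻ ω, {ω | MinorEig (Hmat L W ω) i E (2 * s)}.indicator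
        (fun ω => ENNReal.ofReal (-(resolvent' (Hmat L W ω) (E' + ε * Complex.I) i i).im)) ω
        ∂gaussMeas L ≤
      ENNReal.ofReal (Real.exp 1) * ((ENNReal.ofReal (Real.sqrt ε) *
        (ENNReal.ofReal Real.pi * singInt + volume (Metric.ball (0 : ℂ) ρ)) +
          ENNReal.ofReal (Real.pi ^ 2 * (3 * s))) / volume (Metric.ball (0 : ℂ) ρ)) := by
  have hZ : MeasurableSet {ω : Config L | MinorEig (Hmat L W ω) i E (2 * s)} :=
    ((isClosed_minorEig i E (2 * s)).preimage (continuous_Hmat W)).measurableSet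
  refine lintegral_le_of_local_average (fun e : Torus L × Torus L => e.1 = i ∨ e.2 = i)
    Metric.isOpen_ball.measurableSet (Metric.measure_ball_pos _ _ hρ).ne'
    measure_ball_lt_top.ne _ (Measurable.indicator ?_ hZ) fun ω₀ => ?_
  · exact (measurable_resolvent'_Hmat W measurable_id measurable_const i i).im.neg.ennreal_ofReal
  by_cases hω₀ : MinorEig (Hmat L W ω₀) i E (2 * s)
  · obtain ⟨u, β, hu1, hui, hβ, hu⟩ := hω₀
    have hβ' : |β - E'| ≤ 3 * s := by
      calc |β - E'| = |(β - E) - (E' - E)| := by ring_nf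
        _ ≤ |β - E| + |E' - E| := abs_sub _ _
        _ ≤ _ := by linarith
    have hrow : ∀ ω : Config L, (∀ e, ¬ (e.1 = i ∨ e.2 = i) → ω e = ω₀ e) → ∀ j, j ≠ i →
        (Hmat L W ω *ᵥ u) j = β * u j := fun ω hω j hj => by
      rw [← hu j hj]
      refine Finset.sum_congr rfl fun k _ => ?_
      by_cases hk : k = i
      · simp [hk, hui]
      · exact congrArg (· * u k)
          (Hmat_apply_congr W (hω (j, k) (by simp [hj, hk])) (hω (k, j) (by simp [hj, hk])))
    have hH : ∀ ζ, Hmat L W (hermConfig L W (rankTwo i u ζ)) = rankTwo i u ζ := fun ζ =>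
      Hmat_hermConfig hL (rankTwo_isHermitian i u ζ)
    refine ⟨fun ζ => hermConfig L W (rankTwo i u ζ), measurable_hermConfig W fun j k => ?_,
      fun ζ e he => hermConfig_rankTwo_eq_zero W u ζ he,
      fun ζ hζ => sum_hermConfig_rankTwo_le hL hu1 hui ((?_ : _ ≤ ρ ^ 2).trans hρ2),
      fun ω hω => ⟨?_, ?_⟩⟩
    · simp only [rankTwo, of_apply]
      refine Measurable.add ?_ ?_ <;> split_ifs <;> fun_prop
    · rw [mem_ball_zero_iff] at hζ
      gcongr
    · refine le_trans (lintegral_mono fun ζ => Set.indicator_le_self _ _ _)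
        (le_trans (le_of_eq ?_) (lintegral_resolvent'_rankTwo_le (Hmat_isHermitian W ω) hu1 hui hβ'
          (hrow ω hω) hε))
      simp only [Hmat_add, hH]
    · have hneg : ∀ ζ, rankTwo i (-u) ζ = -rankTwo i u ζ := fun ζ => by
        ext j k
        simp only [rankTwo, of_apply, Pi.neg_apply, Matrix.neg_apply, mul_neg, star_neg]
        split_ifs <;> ring
      refine le_trans (lintegral_mono fun ζ => Set.indicator_le_self _ _ _)
        (le_trans (le_of_eq ?_) (lintegral_resolvent'_rankTwo_le (u := -u) (β := β)
          (Hmat_isHermitian W ω) (by simpa using hu1) (by simpa using hui) hβ'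
          (fun j hj => by rw [mulVec_neg, Pi.neg_apply, hrow ω hω j hj]; simp) hε))
      simp only [Hmat_sub, hH, hneg, ← sub_eq_add_neg]
  · refine ⟨fun _ => 0, measurable_const, fun _ _ _ => rfl, fun _ _ => by simp, fun ω hω => ?_⟩
    have h0 : ω ∉ {ω | MinorEig (Hmat L W ω) i E (2 * s)} := fun h =>
      hω₀ (MinorEig.congr h fun j k hj hk => Hmat_apply_congr W
        (hω (j, k) (by simp [hj, hk])) (hω (k, j) (by simp [hj, hk])))
    simp only [add_zero, sub_zero, Set.indicator_of_notMem h0]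
    simp

/-- Whether translation by `a` preserves the order of the two sites. -/
def SameOrder (a x y : Torus L) : Prop :=
  siteIdx L x < siteIdx L y ↔ siteIdx L (x + a) < siteIdx L (y + a)

lemma sameOrder_symm {a x y : Torus L} (h : SameOrder a x y) : SameOrder a y x := by
  by_cases hxy : x = y
  · rwa [hxy] at h ⊢
  have h1 : siteIdx L x ≠ siteIdx L y := fun e => hxy (siteIdx_injective e)
  have h2 : siteIdx L (x + a) ≠ siteIdx L (y + a) := fun e =>
    hxy (add_right_cancel (siteIdx_injective e))
  unfold SameOrder at *
  omega

open Classical in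
/-- The action of translation by `a` on the real coordinates of the random matrix, up to signs. -/
def shiftPair (a : Torus L) (e : Torus L × Torus L) : Torus L × Torus L :=
  if SameOrder a e.1 e.2 then (e.1 + a, e.2 + a) else (e.2 + a, e.1 + a)

lemma shiftPair_injective (a : Torus L) : Function.Injective (shiftPair a) := by
  rintro ⟨x, y⟩ ⟨x', y'⟩ h
  simp only [shiftPair] at h
  split_ifs at h with h1 h2 h2 <;> simp only [Prod.mk.injEq, add_left_inj] at h <;>
    obtain ⟨rfl, rfl⟩ := h
  · rfl
  · exact absurd (sameOrder_symm h1) h2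
  · exact absurd (sameOrder_symm h2) h1
  · rfl

open Classical in
/-- The signs accompanying `shiftPair`. -/
def shiftSign (a : Torus L) (e : Torus L × Torus L) : ℝ :=
  if siteIdx L e.2 < siteIdx L e.1 ∧ ¬ SameOrder a e.1 e.2 then -1 else 1

lemma Hmat_shift (W : ℕ) (a : Torus L) (ω : Config L) (x y : Torus L) :
    Hmat L W (fun e => shiftSign a e * ω (shiftPair a e)) x y = Hmat L W ω (x + a) (y + a) := by
  have hlt : ∀ x y, siteIdx L x < siteIdx L y →
      Hmat L W (fun e => shiftSign a e * ω (shiftPair a e)) x y =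
        Hmat L W ω (x + a) (y + a) := fun x y h => by
    have h' := not_lt.2 h.le
    rw [Hmat_of_lt W _ h]
    by_cases hs : SameOrder a x y
    · have hs' := sameOrder_symm hs
      rw [Hmat_of_lt W _ (hs.1 h), Jmat_add_right]
      simp [shiftSign, shiftPair, hs, hs']
    · have hs' : ¬ SameOrder a y x := fun h => hs (sameOrder_symm h)
      have h3 : siteIdx L (y + a) < siteIdx L (x + a) := by
        rcases site_trichotomy (x + a) (y + a) with h2 | h2 | h2
        · exact absurd (iff_of_true h h2) hs
        · rw [add_right_cancel h2] at h; exact absurd h (lt_irrefl _)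
        · exact h2
      rw [Hmat_of_gt W _ h3, Jmat_add_right]
      simp [shiftSign, shiftPair, hs, hs', h, h', sub_eq_add_neg]
  rcases site_trichotomy x y with h | rfl | h
  · exact hlt x y h
  · simp [Hmat_diag, shiftSign, shiftPair, SameOrder, Jmat_add_right]
  · rw [← (Hmat_isHermitian W _).apply, hlt y x h, (Hmat_isHermitian W _).apply]

lemma lintegral_resolvent'_diag_eq (W : ℕ) (z : ℂ) (a : Torus L) :
    ∫⁻ ω, ENNReal.ofReal (-(resolvent' (Hmat L W ω) z a a).im) ∂gaussMeas L =
      ∫⁻ ω, ENNReal.ofReal (-(resolvent' (Hmat L W ω) z 0 0).im) ∂gaussMeas L := by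
  have hmp := measurePreserving_stdGauss_signed_perm
    (Equiv.ofBijective _ (Finite.injective_iff_bijective.1 (shiftPair_injective a)))
    (shiftSign a) fun e => by unfold shiftSign; split_ifs <;> simp
  have hm : Measurable fun ω => ENNReal.ofReal (-(resolvent' (Hmat L W ω) z 0 0).im) :=
    (measurable_resolvent'_Hmat W measurable_id measurable_const 0 0).im.neg.ennreal_ofReal
  refine Eq.trans ?_ (hmp.lintegral_comp hm)
  refine lintegral_congr fun ω => ?_
  have h : Hmat L W (fun e => shiftSign a e * ω (shiftPair a e)) =
      (Hmat L W ω).submatrix (Equiv.addRight a) (Equiv.addRight a) := by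
    ext x y
    exact Hmat_shift W a ω x y
  have h2 : resolvent' (Hmat L W (fun e => shiftSign a e * ω (shiftPair a e))) z 0 0 =
      resolvent' (Hmat L W ω) z a a := by
    have h3 : z • (1 : Matrix (Torus L) (Torus L) ℂ) -
        (Hmat L W ω).submatrix (Equiv.addRight a) (Equiv.addRight a) =
        (z • 1 - Hmat L W ω).submatrix (Equiv.addRight a) (Equiv.addRight a) := by
      rw [submatrix_sub, Pi.sub_apply, Pi.sub_apply, submatrix_smul, Pi.smul_apply, Pi.smul_apply,
        submatrix_one_equiv]
    rw [resolvent', h, h3, inv_submatrix_equiv]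
    simp [resolvent']
  rw [← h2]
  rfl

end Averages

section DensityBound

variable {L : Fin 3 → ℕ} [∀ i, NeZero (L i)]

/-- The expectation of `-Im G₀₀`, as an extended nonnegative real. -/
def negImGreen (L : Fin 3 → ℕ) [∀ i, NeZero (L i)] (W : ℕ) (ε E : ℝ) : ENNReal :=
  ∫⁻ ω, ENNReal.ofReal (-(resolvent' (Hmat L W ω) (E + ε * Complex.I) 0 0).im) ∂gaussMeas L

instance : IsProbabilityMeasure (gaussMeas L) := by unfold gaussMeas; infer_instance

lemma measurable_negIm_uncurry (W : ℕ) (ε : ℝ) (i : Torus L) :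
    Measurable fun p : ℝ × Config L =>
      ENNReal.ofReal (-(resolvent' (Hmat L W p.2) (p.1 + ε * Complex.I) i i).im) :=
  (measurable_resolvent'_Hmat W measurable_snd (by fun_prop) i i).im.neg.ennreal_ofReal

lemma measurable_negImGreen (W : ℕ) (ε : ℝ) : Measurable (negImGreen L W ε) :=
  (measurable_negIm_uncurry W ε 0).lintegral_prod_right'

lemma two_mul_negImGreen_le {W : ℕ} (hL : ∀ i, L i ≤ W) {u : ℝ}
    (hu : |u| ≤ 1 / Fintype.card (Torus L)) (ε E : ℝ) :
    2 * negImGreen L W ε E ≤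
      ENNReal.ofReal (Real.exp 64) * (negImGreen L W ε (E - u) + negImGreen L W ε (E + u)) := by
  have hB : (((u : ℂ) • 1 : Matrix (Torus L) (Torus L) ℂ)).IsHermitian := by
    simp [IsHermitian, conjTranspose_smul]
  have hm : Measurable fun ω => ENNReal.ofReal
      (-(resolvent' (Hmat L W ω) (E + ε * Complex.I) 0 0).im) :=
    (measurable_resolvent'_Hmat W measurable_id measurable_const 0 0).im.neg.ennreal_ofReal
  refine (lintegral_le_translates (hermConfig L W ((u : ℂ) • 1))
    (sum_hermConfig_smul_one_le hL hu) _ hm).trans (le_of_eq ?_)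
  have h1 : ∀ ω, resolvent' (Hmat L W (ω + hermConfig L W ((u : ℂ) • 1))) (E + ε * Complex.I) =
      resolvent' (Hmat L W ω) ((E - u : ℝ) + ε * Complex.I) := fun ω => by
    rw [Hmat_add, Hmat_hermConfig hL hB, resolvent', resolvent', ← sub_sub, sub_right_comm,
      ← sub_smul]
    push_cast
    ring_nf
  have h2 : ∀ ω, resolvent' (Hmat L W (ω - hermConfig L W ((u : ℂ) • 1))) (E + ε * Complex.I) =
      resolvent' (Hmat L W ω) ((E + u : ℝ) + ε * Complex.I) := fun ω => by
    rw [Hmat_sub, Hmat_hermConfig hL hB, resolvent', resolvent', sub_sub_eq_add_sub, ← add_smul]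
    push_cast
    ring_nf
  simp only [h1, h2]
  rfl

lemma negImGreen_le_setLIntegral {W : ℕ} (hL : ∀ i, L i ≤ W) (ε E : ℝ) {s : ℝ}
    (hs : s ≤ 1 / Fintype.card (Torus L)) :
    ENNReal.ofReal (2 * s) * negImGreen L W ε E ≤ ENNReal.ofReal (Real.exp 64) *
      ∫⁻ t in Set.Icc (E - s) (E + s), negImGreen L W ε t := by
  have hm := measurable_negImGreen (L := L) W ε
  have h1 : ∫⁻ u in Set.Icc (-s) s, negImGreen L W ε (E - u) =
      ∫⁻ t in Set.Icc (E - s) (E + s), negImGreen L W ε t := by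
    rw [← (Measure.measurePreserving_sub_left volume E).setLIntegral_comp_preimage measurableSet_Icc hm]
    congr 2
    ext u
    simp only [Set.mem_Icc, Set.mem_preimage]
    constructor <;> rintro ⟨h1, h2⟩ <;> constructor <;> linarith
  have h2 : ∫⁻ u in Set.Icc (-s) s, negImGreen L W ε (E + u) =
      ∫⁻ t in Set.Icc (E - s) (E + s), negImGreen L W ε t := by
    rw [← (measurePreserving_add_left volume E).setLIntegral_comp_preimage measurableSet_Icc hm]
    congr 2
    ext u
    simp only [Set.mem_Icc, Set.mem_preimage]
    constructor <;> rintro ⟨h1, h2⟩ <;> constructor <;> linarith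
  have h3 : ∫⁻ _u in Set.Icc (-s) s, 2 * negImGreen L W ε E ≤
      ∫⁻ u in Set.Icc (-s) s, ENNReal.ofReal (Real.exp 64) *
        (negImGreen L W ε (E - u) + negImGreen L W ε (E + u)) :=
    setLIntegral_mono' measurableSet_Icc fun u hu =>
      two_mul_negImGreen_le hL ((abs_le.2 hu).trans hs) ε E
  rw [setLIntegral_const, lintegral_const_mul _ (by fun_prop), lintegral_add_left (by fun_prop),
    h1, h2, ← two_mul, Real.volume_Icc, mul_assoc, mul_left_comm (ENNReal.ofReal (Real.exp 64))]
    at h3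
  have h4 := (ENNReal.mul_le_mul_iff_right (by norm_num : (2 : ENNReal) ≠ 0) (by norm_num)).1 h3
  refine le_trans (le_of_eq ?_) h4
  rw [mul_comm]
  ring_nf

lemma card_mul_setLIntegral_negImGreen_le {W : ℕ} (hL : ∀ i, L i ≤ W)
    {E s ε ρ : ℝ} (hs : 0 < s) (hε : 0 < ε) (hρ : 0 < ρ)
    (hρ2 : ρ ^ 2 ≤ 1 / (128 * Fintype.card (Torus L))) :
    Fintype.card (Torus L) * ∫⁻ t in Set.Icc (E - s) (E + s), negImGreen L W ε t ≤
      (ENNReal.ofReal Real.pi + Fintype.card (Torus L) * ENNReal.ofReal (2 * ε / s)) +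
      Fintype.card (Torus L) * (ENNReal.ofReal (2 * s) *
      (ENNReal.ofReal (Real.exp 1) * ((ENNReal.ofReal (Real.sqrt ε) *
        (ENNReal.ofReal Real.pi * singInt + volume (Metric.ball (0 : ℂ) ρ)) +
          ENNReal.ofReal (Real.pi ^ 2 * (3 * s))) / volume (Metric.ball (0 : ℂ) ρ)))) := by
  set g : Torus L → ℝ → Config L → ENNReal := fun i t ω =>
    ENNReal.ofReal (-(resolvent' (Hmat L W ω) (t + ε * Complex.I) i i).im) with hg
  set Z : Torus L → Set (Config L) := fun i => {ω | MinorEig (Hmat L W ω) i E (2 * s)} with hZ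
  have hgm : ∀ i, Measurable fun p : ℝ × Config L => g i p.1 p.2 :=
    fun i => measurable_negIm_uncurry W ε i
  have hZm : ∀ i, MeasurableSet (Z i) := fun i =>
    ((isClosed_minorEig i E (2 * s)).preimage (continuous_Hmat W)).measurableSet
  have hgZ : ∀ i, Measurable fun p : ℝ × Config L => (Z i).indicator (g i p.1) p.2 := fun i =>
    (hgm i).indicator ((hZm i).preimage measurable_snd)
  set A := ENNReal.ofReal Real.pi + Fintype.card (Torus L) * ENNReal.ofReal (2 * ε / s)
  have hpt : ∀ ω, ∫⁻ t in Set.Icc (E - s) (E + s), ∑ i, g i t ω ≤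
      A + ∫⁻ t in Set.Icc (E - s) (E + s), ∑ i, (Z i).indicator (g i t) ω := fun ω => by
    rcases lintegral_resolvent'_le_or (Hmat_isHermitian W ω) (E := E) hs hε with h | h
    · exact h.trans le_self_add
    · refine le_trans (le_of_eq (lintegral_congr fun t => Finset.sum_congr rfl fun i _ => ?_))
        le_add_self
      exact (Set.indicator_of_mem (s := Z i) (h i) (g i t)).symm
  calc Fintype.card (Torus L) * ∫⁻ t in Set.Icc (E - s) (E + s), negImGreen L W ε t
      = ∫⁻ t in Set.Icc (E - s) (E + s), ∫⁻ ω, ∑ i, g i t ω ∂gaussMeas L := by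
        rw [← lintegral_const_mul _ (measurable_negImGreen W ε)]
        refine lintegral_congr fun t => ?_
        rw [lintegral_finsetSum _ fun i _ => (hgm i).of_uncurry_left (x := t)]
        simp only [hg, lintegral_resolvent'_diag_eq, Finset.sum_const, Finset.card_univ,
          nsmul_eq_mul]
        rfl
    _ = ∫⁻ ω, (∫⁻ t in Set.Icc (E - s) (E + s), ∑ i, g i t ω) ∂gaussMeas L :=
        lintegral_lintegral_swap (Finset.measurable_fun_sum _ fun i _ => hgm i).aemeasurable
    _ ≤ ∫⁻ ω, (A + ∫⁻ t in Set.Icc (E - s) (E + s), ∑ i, (Z i).indicator (g i t) ω)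
          ∂gaussMeas L := lintegral_mono hpt
    _ = A + ∫⁻ t in Set.Icc (E - s) (E + s), ∑ i, ∫⁻ ω, (Z i).indicator (g i t) ω
          ∂gaussMeas L := by
        rw [lintegral_add_left measurable_const, lintegral_const, measure_univ, mul_one,
          ← lintegral_lintegral_swap (Finset.measurable_fun_sum _ fun i _ => hgZ i).aemeasurable]
        congr 1
        refine lintegral_congr fun t => ?_
        exact lintegral_finsetSum _ fun i _ => (hgm i).of_uncurry_left.indicator (hZm i)
    _ ≤ A + ∫⁻ _t in Set.Icc (E - s) (E + s), ∑ _i : Torus L, _ := by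
        gcongr A + ?_
        refine setLIntegral_mono' measurableSet_Icc fun t ht => Finset.sum_le_sum fun i _ =>
          lintegral_minorEig_resolvent'_le hL i (s := s) ?_ hε hρ hρ2
        rw [abs_le]
        constructor <;> linarith [ht.1, ht.2]
    _ = _ := by
        rw [setLIntegral_const, Real.volume_Icc, Finset.sum_const, Finset.card_univ, nsmul_eq_mul]
        ring_nf

/-- The uniform bound for the averaged `-Im G₀₀` in the limit `ε → 0`. -/
def dosBound : ENNReal :=
  ENNReal.ofReal (Real.exp 64) * (ENNReal.ofReal Real.pi +
    2 * (ENNReal.ofReal (Real.exp 1) * ENNReal.ofReal (384 * Real.pi)))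

lemma dosBound_ne_top : dosBound ≠ ⊤ := by
  unfold dosBound
  finiteness

lemma exists_negImGreen_le {W : ℕ} (hL : ∀ i, L i ≤ W) : ∃ X : ENNReal, X ≠ ⊤ ∧
    ∀ E ε : ℝ, 0 < ε → negImGreen L W ε E ≤ dosBound + ENNReal.ofReal (Real.sqrt ε + ε) * X := by
  set N := (Fintype.card (Torus L) : ℝ) with hN
  have hN0 : 0 < N := by rw [hN]; exact_mod_cast Fintype.card_pos
  set ρ : ℝ := Real.sqrt (1 / (128 * N)) with hρ
  have hρ0 : 0 < ρ := Real.sqrt_pos.2 (by positivity)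
  have hρ2 : ρ ^ 2 = 1 / (128 * N) := Real.sq_sqrt (by positivity)
  set V := volume (Metric.ball (0 : ℂ) ρ) with hV
  have hV' : V = ENNReal.ofReal (Real.pi / (128 * N)) := by
    rw [hV, Complex.volume_ball, ← ENNReal.ofReal_pow hρ0.le, hρ2]
    have : (NNReal.pi : ENNReal) = ENNReal.ofReal Real.pi := by
      rw [ENNReal.ofReal, Real.toNNReal_of_nonneg Real.pi_pos.le]; rfl
    rw [this, ← ENNReal.ofReal_mul (by positivity)]
    congr 1; ring
  have hV0 : V ≠ 0 := (Metric.measure_ball_pos _ _ hρ0).ne'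
  have hVt : V ≠ ⊤ := measure_ball_lt_top.ne
  set X0 := ENNReal.ofReal Real.pi * singInt + V with hX0
  have hX0t : X0 ≠ ⊤ := ENNReal.add_ne_top.2 ⟨ENNReal.mul_ne_top ENNReal.ofReal_ne_top singInt_ne_top, hVt⟩
  refine ⟨ENNReal.ofReal (Real.exp 64) * (ENNReal.ofReal N * ENNReal.ofReal (2 * N) +
    2 * (ENNReal.ofReal (Real.exp 1) * (X0 / V))), ?_, fun E ε hε => ?_⟩
  · have : X0 / V ≠ ⊤ := ENNReal.div_ne_top hX0t hV0
    finiteness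
  have hs : 0 < 1 / N := by positivity
  have h1 := negImGreen_le_setLIntegral hL ε E (le_refl (1 / N))
  have h2 := card_mul_setLIntegral_negImGreen_le hL (E := E) hs hε hρ0 hρ2.le
  have hcard : (Fintype.card (Torus L) : ENNReal) = ENNReal.ofReal N := by
    rw [hN, ENNReal.ofReal_natCast]
  rw [hcard] at h2
  have hN2 : ENNReal.ofReal N * ENNReal.ofReal (2 * (1 / N)) = 2 := by
    rw [← ENNReal.ofReal_mul hN0.le]
    have : N * (2 * (1 / N)) = 2 := by field_simp
    rw [this]; simp
  have h3 : 2 * negImGreen L W ε E ≤ ENNReal.ofReal (Real.exp 64) *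
      (ENNReal.ofReal N * ∫⁻ t in Set.Icc (E - 1 / N) (E + 1 / N), negImGreen L W ε t) := by
    rw [← hN2, mul_assoc, mul_left_comm (ENNReal.ofReal (Real.exp 64))]
    gcongr
  have h4 := h3.trans (mul_le_mul_right h2 _)
  rw [← mul_assoc (ENNReal.ofReal N) (ENNReal.ofReal (2 * (1 / N))), hN2] at h4
  have h5 : ENNReal.ofReal (Real.pi ^ 2 * (3 * (1 / N))) / V = ENNReal.ofReal (384 * Real.pi) := by
    rw [hV', ← ENNReal.ofReal_div_of_pos (by positivity)]
    congr 1
    field_simp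
    norm_num
  have h6 : ENNReal.ofReal (2 * ε / (1 / N)) = ENNReal.ofReal ε * ENNReal.ofReal (2 * N) := by
    rw [← ENNReal.ofReal_mul hε.le]
    congr 1
    field_simp
  rw [ENNReal.add_div, h5, h6, mul_div_assoc] at h4
  calc negImGreen L W ε E ≤ 2 * negImGreen L W ε E := by
        rw [two_mul]; exact le_self_add
    _ ≤ _ := h4
    _ ≤ ENNReal.ofReal (Real.exp 64) * (ENNReal.ofReal Real.pi +
          ENNReal.ofReal N * (ENNReal.ofReal (Real.sqrt ε + ε) * ENNReal.ofReal (2 * N)) +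
          2 * (ENNReal.ofReal (Real.exp 1) * (ENNReal.ofReal (Real.sqrt ε + ε) * (X0 / V) +
            ENNReal.ofReal (384 * Real.pi)))) := by
        gcongr
        · exact le_add_of_nonneg_left (Real.sqrt_nonneg _)
        · exact le_add_of_nonneg_right hε.le
    _ = _ := by
        unfold dosBound
        ring

end DensityBound

/-- Local domination suffices for an integral of holomorphic functions to be holomorphic. -/
lemma differentiableOn_integral_of_locally_dominated {α : Type*} [MeasurableSpace α]
    {μ : Measure α} {U : Set ℂ} (hU : IsOpen U) {F : ℂ → α → ℂ}
    (hm : ∀ z ∈ U, AEStronglyMeasurable (F z) μ) (hd : ∀ a, DifferentiableOn ℂ (F · a) U)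
    (hb : ∀ z₀ ∈ U, ∃ r > 0, ∃ b : α → ℝ, Integrable b μ ∧
      ∀ z ∈ Metric.ball z₀ r, z ∈ U → ∀ a, ‖F z a‖ ≤ b a) :
    DifferentiableOn ℂ (fun z => ∫ a, F z a ∂μ) U := by
  intro z₀ hz₀
  obtain ⟨r₁, hr₁, b, hbi, hb⟩ := hb z₀ hz₀
  obtain ⟨r₂, hr₂, hball⟩ := Metric.isOpen_iff.1 hU z₀ hz₀
  set r := min r₁ r₂ with hrdef
  have hr : 0 < r := lt_min hr₁ hr₂
  have hrU : ∀ z ∈ Metric.ball z₀ r, z ∈ U := fun z hz =>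
    hball (Metric.ball_subset_ball (min_le_right _ _) hz)
  have hrb : ∀ z ∈ Metric.ball z₀ r, ∀ a, ‖F z a‖ ≤ b a := fun z hz a =>
    hb z (Metric.ball_subset_ball (min_le_left _ _) hz) (hrU z hz) a
  have hda : ∀ z ∈ U, ∀ a, HasDerivAt (F · a) (deriv (F · a) z) z := fun z hz a =>
    ((hd a).differentiableAt (hU.mem_nhds hz)).hasDerivAt
  have hseq : Tendsto (fun n : ℕ => z₀ + ((r / (n + 2) : ℝ) : ℂ)) atTop (𝓝[≠] z₀) := by
    refine tendsto_nhdsWithin_iff.2 ⟨?_, Eventually.of_forall fun n => ?_⟩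
    · have h1 : Tendsto (fun n : ℕ => r / ((n : ℝ) + 2)) atTop (𝓝 0) :=
        tendsto_const_nhds.div_atTop
          (tendsto_atTop_add_const_right _ _ tendsto_natCast_atTop_atTop)
      have h2 := ((Complex.continuous_ofReal.tendsto 0).comp h1).const_add z₀
      rw [Complex.ofReal_zero, add_zero] at h2
      exact h2
    · have : (0 : ℝ) < r / (n + 2) := by positivity
      simpa using fun h : r = 0 ∨ (n : ℂ) + 2 = 0 => this.ne' (by
        rcases h with h | h
        · simp [h]
        · have : ((n : ℝ) + 2) = 0 := by exact_mod_cast h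
          simp [this])
  have hseqU : ∀ n : ℕ, z₀ + ((r / (n + 2) : ℝ) : ℂ) ∈ U := fun n => hrU _ (by
    have h2 : (0 : ℝ) ≤ r / (n + 2) := by positivity
    rw [Metric.mem_ball, dist_eq_norm, add_sub_cancel_left, Complex.norm_real, Real.norm_of_nonneg h2,
      div_lt_iff₀ (by positivity)]
    nlinarith [(n.cast_nonneg : (0 : ℝ) ≤ n)])
  have hderm : AEStronglyMeasurable (fun a => deriv (F · a) z₀) μ := by
    refine aestronglyMeasurable_of_tendsto_ae atTop
      (f := fun (n : ℕ) a => slope (F · a) z₀ (z₀ + ((r / (n + 2) : ℝ) : ℂ))) (fun n => ?_)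
      (Eventually.of_forall fun a => (hda z₀ hz₀ a).tendsto_slope.comp hseq)
    simp only [slope_def_field]
    simp only [div_eq_mul_inv]
    exact AEStronglyMeasurable.mul_const ((hm _ (hseqU n)).sub (hm _ hz₀)) _
  refine (hasDerivAt_integral_of_dominated_loc_of_deriv_le (F := F)
    (F' := fun z a => deriv (F · a) z) (bound := fun a => b a / (r / 3))
    (Metric.ball_mem_nhds z₀ (half_pos hr)) ?_ ?_ hderm (Eventually.of_forall fun a z hz => ?_)
    (hbi.div_const _) (Eventually.of_forall fun a z hz => ?_)).2.differentiableAt.differentiableWithinAt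
  · filter_upwards [hU.mem_nhds hz₀] with z hz using hm z hz
  · exact hbi.mono' (hm z₀ hz₀) (Eventually.of_forall fun a => hrb z₀ (Metric.mem_ball_self hr) a)
  · have hsub : Metric.closedBall z (r / 3) ⊆ Metric.ball z₀ r := fun w hw => by
      rw [Metric.mem_closedBall] at hw
      rw [Metric.mem_ball] at hz ⊢
      linarith [dist_triangle w z z₀]
    refine Complex.norm_deriv_le_of_forall_mem_sphere_norm_le (by positivity) ?_ fun w hw =>
      hrb w (hsub (Metric.sphere_subset_closedBall hw)) a
    refine DifferentiableOn.diffContOnCl ((hd a).mono ?_)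
    rw [closure_ball _ (by positivity)]
    exact fun w hw => hrU w (hsub hw)
  · exact hda z (hrU z (Metric.ball_subset_ball (by linarith) hz)) a

lemma differentiable_det_of_entries {n : Type*} [Fintype n] [DecidableEq n]
    {F : ℂ → Matrix n n ℂ} (hF : ∀ i j, Differentiable ℂ fun z => F z i j) :
    Differentiable ℂ fun z => (F z).det := by
  simp only [det_apply']
  fun_prop

lemma differentiableOn_resolvent' {n : Type*} [Fintype n] [DecidableEq n] {M : Matrix n n ℂ}
    (hM : M.IsHermitian) (i j : n) :
    DifferentiableOn ℂ (fun z => resolvent' M z i j) {z | 0 < z.im} := by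
  have hentry : ∀ i j, Differentiable ℂ fun z : ℂ => (z • (1 : Matrix n n ℂ) - M) i j :=
    fun i j => by
      simp only [Matrix.sub_apply, Matrix.smul_apply, smul_eq_mul]
      fun_prop
  have hadj : Differentiable ℂ fun z : ℂ => (z • (1 : Matrix n n ℂ) - M).adjugate i j := by
    simp only [adjugate_apply]
    refine differentiable_det_of_entries fun k l => ?_
    simp only [updateRow_apply]
    split_ifs
    · fun_prop
    · exact hentry k l
  have h : (fun z => resolvent' M z i j) = fun z : ℂ => (z • (1 : Matrix n n ℂ) - M).det⁻¹ *
      (z • (1 : Matrix n n ℂ) - M).adjugate i j := by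
    funext z
    rw [resolvent', inv_def, Ring.inverse_eq_inv', Matrix.smul_apply, smul_eq_mul]
  rw [h]
  exact ((differentiable_det_of_entries hentry).differentiableOn.inv fun z hz =>
    (isUnit_det_shifted hM hz).ne_zero).mul hadj.differentiableOn

lemma differentiable_integral_exp_linear {ι : Type*} [Fintype ι] (v : ι → ℝ) {g : (ι → ℝ) → ℂ}
    (hg : Measurable g) {C : ℝ} (hC : ∀ x, ‖g x‖ ≤ C) :
    Differentiable ℂ fun w : ℂ =>
      ∫ x, Complex.exp (w * ((∑ i, v i * x i : ℝ) : ℂ)) * g x ∂stdGauss ι := by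
  rw [← differentiableOn_univ]
  refine differentiableOn_integral_of_locally_dominated isOpen_univ
    (fun w _ => Measurable.aestronglyMeasurable (by fun_prop)) (fun x => by fun_prop) fun w₀ _ => ?_
  set R := ‖w₀‖ + 1
  have hint : ∀ t : ℝ, Integrable (fun x => Real.exp (t * ∑ i, v i * x i)) (stdGauss ι) :=
    fun t => by
      convert integrable_exp_linear_stdGauss (t • v) using 3 with x
      simp [Finset.mul_sum, mul_assoc]
  refine ⟨1, one_pos, fun x => (Real.exp (R * ∑ i, v i * x i) +
    Real.exp (-R * ∑ i, v i * x i)) * C, ((hint R).add (hint (-R))).mul_const C,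
    fun w hw _ x => ?_⟩
  rw [norm_mul, Complex.norm_exp, Complex.re_mul_ofReal]
  set y := ∑ i, v i * x i
  have hw' : |w.re| ≤ R := by
    rw [Metric.mem_ball, dist_eq_norm] at hw
    have := norm_le_norm_add_norm_sub' w w₀
    linarith [Complex.abs_re_le_norm w]
  have hy : w.re * y ≤ R * |y| :=
    (le_abs_self _).trans (by rw [abs_mul]; gcongr)
  refine mul_le_mul ?_ (hC x) (norm_nonneg _) (by positivity)
  · rcases abs_cases y with ⟨h, _⟩ | ⟨h, _⟩ <;> rw [h] at hy
    · exact (Real.exp_le_exp.2 hy).trans (le_add_of_nonneg_right (Real.exp_nonneg _))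
    · refine (Real.exp_le_exp.2 (hy.trans (le_of_eq ?_))).trans
        (le_add_of_nonneg_left (Real.exp_nonneg _))
      ring

section Limit

variable {L : Fin 3 → ℕ} [∀ i, NeZero (L i)]

lemma exists_tendsto_avgGreen {W : ℕ} (hL : ∀ i, L i ≤ W) (E : ℝ) :
    ∃ l : ℂ, Tendsto (fun ε : ℝ => avgGreen L W E ε 0 0) (𝓝[>] (0 : ℝ)) (𝓝 l) := by
  set z₀ : ℂ := E + Complex.I with hz₀
  have hz₀im : z₀.im = 1 := by simp [hz₀]
  set m : ℂ → ℂ := fun z => ∫ ω, resolvent' (Hmat L W ω) z 0 0 ∂gaussMeas L with hm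
  set v : Config L := hermConfig L W 1 with hv
  set g : Config L → ℂ := fun ω => resolvent' (Hmat L W ω) z₀ 0 0 with hg
  have hgm : Measurable g := measurable_resolvent'_Hmat W measurable_id measurable_const 0 0
  have hgC : ∀ ω, ‖g ω‖ ≤ 1 := fun ω => by
    simpa [hz₀im] using norm_resolvent'_le (Hmat_isHermitian W ω) (hz₀im ▸ one_pos : 0 < z₀.im) 0
  set S : ℝ := ∑ e, v e ^ 2
  set Φ : ℂ → ℂ := fun w =>
    Complex.exp (-(w ^ 2 * (S / 2 : ℝ))) *
      ∫ ω, Complex.exp (w * ((∑ e, v e * ω e : ℝ) : ℂ)) * g ω ∂gaussMeas L with hΦ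
  have hΦd : Differentiable ℂ Φ := by
    have := differentiable_integral_exp_linear v hgm hgC
    exact Differentiable.mul (by fun_prop) this
  have hmd : DifferentiableOn ℂ m {z | 0 < z.im} := by
    refine differentiableOn_integral_of_locally_dominated
      (isOpen_lt continuous_const Complex.continuous_im)
      (fun z _ => (measurable_resolvent'_Hmat W measurable_id measurable_const
        0 0).aestronglyMeasurable)
      (fun ω => differentiableOn_resolvent' (Hmat_isHermitian W ω) 0 0) fun z hz => ?_
    have hz' : 0 < z.im := hz
    refine ⟨z.im / 2, half_pos hz', fun _ => 1 / (z.im / 2), integrable_const _,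
      fun w hw hwU ω => (norm_resolvent'_le (Hmat_isHermitian W ω) hwU 0).trans ?_⟩
    have h1 := (Complex.abs_im_le_norm (w - z)).trans_lt (mem_ball_iff_norm.1 hw)
    rw [Complex.sub_im] at h1
    exact one_div_le_one_div_of_le (half_pos hz') (by linarith [(abs_lt.1 h1).1])
  have hreal : ∀ t : ℝ, m (z₀ - t) = Φ t := fun t => by
    have h1 : ∀ ω, resolvent' (Hmat L W ω) (z₀ - t) 0 0 = g (ω + t • v) := fun ω => by
      simp only [hg]
      rw [Hmat_add, Hmat_smul, Hmat_hermConfig hL isHermitian_one, resolvent', resolvent',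
        sub_smul, sub_sub, add_comm (Hmat L W ω)]
    simp only [hm, h1, hΦ]
    refine (integral_stdGauss_add (t • v) g hgm).trans ?_
    rw [← integral_const_mul]
    refine integral_congr_ae (Eventually.of_forall fun ω => ?_)
    simp only [cmDensity]
    rw [← mul_assoc, ← Complex.exp_add, Complex.ofReal_exp]
    congr 2
    rw [Finset.sum_sub_distrib]
    have h2 : ∑ e, (t • v) e * ω e = t * ∑ e, v e * ω e := by
      simp [Finset.mul_sum, mul_assoc]
    have h3 : ∑ e, (t • v) e ^ 2 / 2 = t ^ 2 * (S / 2) := by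
      simp only [Pi.smul_apply, smul_eq_mul, mul_pow, S, ← Finset.sum_div, ← Finset.mul_sum]
      ring
    rw [h2, h3]
    push_cast
    ring
  set U : Set ℂ := {w | w.im < 1} with hU
  have hUopen : IsOpen U := isOpen_lt Complex.continuous_im continuous_const
  have hmU : DifferentiableOn ℂ (fun w => m (z₀ - w)) U := by
    refine hmd.comp (by fun_prop) fun w hw => ?_
    have : w.im < 1 := hw
    simp only [Set.mem_ofPred_eq, Complex.sub_im, hz₀im]
    linarith
  have heq : Set.EqOn (fun w => m (z₀ - w)) Φ U := by
    refine AnalyticOnNhd.eqOn_of_preconnected_of_frequently_eq (z₀ := 0)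
      (hmU.analyticOnNhd hUopen) (hΦd.differentiableOn.analyticOnNhd hUopen)
      (convex_halfSpace_im_lt 1).isPreconnected (by simp [hU]) ?_
    have hseq : Tendsto (fun n : ℕ => ((1 / ((n : ℝ) + 1) : ℝ) : ℂ)) atTop (𝓝[≠] 0) := by
      refine tendsto_nhdsWithin_iff.2 ⟨?_, Eventually.of_forall fun n => ?_⟩
      · exact (Complex.continuous_ofReal.tendsto 0).comp
          (tendsto_one_div_add_atTop_nhds_zero_nat (𝕜 := ℝ))
      · exact Complex.ofReal_ne_zero.2 (by positivity)
    exact hseq.frequently (Frequently.of_forall fun n => hreal _)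
  refine ⟨Φ Complex.I, ?_⟩
  have hlim : Tendsto (fun ε : ℝ => Φ (Complex.I - ε * Complex.I)) (𝓝[>] (0 : ℝ))
      (𝓝 (Φ Complex.I)) := by
    have hc : Continuous fun ε : ℝ => Φ (Complex.I - ε * Complex.I) :=
      hΦd.continuous.comp (by fun_prop)
    simpa using (hc.tendsto 0).mono_left nhdsWithin_le_nhds
  refine hlim.congr' ?_
  filter_upwards [self_mem_nhdsWithin] with ε hε
  have hε' : 0 < ε := hε
  rw [← heq (by simpa [hU] using hε')]
  have : z₀ - (Complex.I - ε * Complex.I) = E + ε * Complex.I := by rw [hz₀]; ring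
  simp only [this]
  rfl

lemma ofReal_neg_im_avgGreen (W : ℕ) (E : ℝ) {ε : ℝ} (hε : 0 < ε) :
    0 ≤ -(avgGreen L W E ε 0 0).im ∧
      ENNReal.ofReal (-(avgGreen L W E ε 0 0).im) = negImGreen L W ε E := by
  have hz : 0 < ((E : ℂ) + ε * Complex.I).im := by simpa using hε
  have hint : Integrable (fun ω => Green L W E ε ω 0 0) (gaussMeas L) :=
    (integrable_const (1 / ((E : ℂ) + ε * Complex.I).im)).mono'
      (measurable_resolvent'_Hmat W measurable_id measurable_const 0 0).aestronglyMeasurable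
      (Eventually.of_forall fun ω => norm_resolvent'_le (Hmat_isHermitian W ω) hz 0)
  have h1 : -(avgGreen L W E ε 0 0).im = ∫ ω, -(Green L W E ε ω 0 0).im ∂gaussMeas L := by
    rw [integral_neg]
    exact congrArg Neg.neg (Complex.imCLM.integral_comp_comm hint).symm
  have h2 : ∀ ω, 0 ≤ -(Green L W E ε ω 0 0).im := fun ω =>
    neg_im_resolvent'_nonneg (Hmat_isHermitian W ω) hz 0
  rw [h1]
  exact ⟨integral_nonneg h2,
    ofReal_integral_eq_lintegral_ofReal hint.im.neg (Eventually.of_forall h2)⟩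

end Limit

/-- On a single cube of side `W`, the averaged density of states is bounded
uniformly in `W` and `Λ` for `E ∈ 𝓘`. -/
theorem dos_bounded_cube (η : ℝ) (hη : 0 < η) :
    ∃ (W₀ : ℕ) (K : ℝ), 0 < K ∧
      ∀ (W : ℕ), W₀ ≤ W →
      ∀ (L : Fin 3 → ℕ) [∀ i, NeZero (L i)], (∀ i, L i = W) →
      ∀ E ∈ specI η,
        ∃ ρΛ : ℝ,
          Tendsto (fun ε : ℝ => dos L W E ε) (𝓝[>] (0 : ℝ)) (𝓝 ρΛ) ∧
          |ρΛ| ≤ K := by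
  refine ⟨0, dosBound.toReal / Real.pi + 1, by positivity, fun W _ L _ hLW E _ => ?_⟩
  have hL : ∀ i, L i ≤ W := fun i => (hLW i).le
  obtain ⟨l, hl⟩ := exists_tendsto_avgGreen hL E
  have him : Tendsto (fun ε : ℝ => -(avgGreen L W E ε 0 0).im) (𝓝[>] (0 : ℝ)) (𝓝 (-l.im)) :=
    ((Complex.continuous_im.tendsto l).comp hl).neg
  refine ⟨-(1 / Real.pi) * l.im, ((Complex.continuous_im.tendsto l).comp hl).const_mul _, ?_⟩
  have hnonneg : 0 ≤ -l.im := by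
    refine ge_of_tendsto him ?_
    filter_upwards [self_mem_nhdsWithin] with ε hε using (ofReal_neg_im_avgGreen W E hε).1
  obtain ⟨X, hX, hbound⟩ := exists_negImGreen_le hL
  have hle : ENNReal.ofReal (-l.im) ≤ dosBound := by
    have h1 : Tendsto (fun ε : ℝ => dosBound + ENNReal.ofReal (Real.sqrt ε + ε) * X)
        (𝓝[>] (0 : ℝ)) (𝓝 (dosBound + 0 * X)) := by
      refine tendsto_const_nhds.add (ENNReal.Tendsto.mul_const ?_ (Or.inr hX))
      have hc : Continuous fun ε : ℝ => ENNReal.ofReal (Real.sqrt ε + ε) :=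
        ENNReal.continuous_ofReal.comp (by fun_prop)
      simpa using (hc.tendsto 0).mono_left nhdsWithin_le_nhds
    rw [zero_mul, add_zero] at h1
    refine le_of_tendsto_of_tendsto ((ENNReal.continuous_ofReal.tendsto _).comp him) h1 ?_
    filter_upwards [self_mem_nhdsWithin] with ε hε
    exact (ofReal_neg_im_avgGreen W E hε).2.trans_le (hbound E ε hε)
  have hle' : -l.im ≤ dosBound.toReal := (ENNReal.ofReal_le_iff_le_toReal dosBound_ne_top).1 hle
  have heq : -(1 / Real.pi) * l.im = -l.im / Real.pi := by ring
  rw [heq, abs_of_nonneg (by positivity)]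
  have : -l.im / Real.pi ≤ dosBound.toReal / Real.pi := by gcongr
  linarith
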